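/- arXiv:1512.03531 — 6 statements merged into one kernel-verified Lean document; each statement's English description precedes it below -/
import Mathlib

section
/- (Blow-up rank increment dichotomy.) For all positive integers n, d, d′ there exists a natural number N such that the following holds. Let F be a field with |F| ≥ N, let B ≤ M(n,F) be a matrix space, let r < d′ be a nonnegative integer, and suppose the (d,d)-blow-up B^{(d,d)} contains a matrix A with rank(A) = rd. Then either B has an (n − r)-shrunk subspace, or the (dd′, dd′)-blow-up B^{(dd′,dd′)} contains a matrix of rank at least (r + 1)dd′. -/
open Matrix Kronecker

/-- The (k,ℓ)-blow-up of a matrix space `B ≤ M(n,F)`. -/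
def blowUp {F : Type} [Field F] {n : ℕ} (B : Submodule F (Matrix (Fin n) (Fin n) F))
    (k ℓ : ℕ) : Submodule F (Matrix (Fin n × Fin k) (Fin n × Fin ℓ) F) :=
  Submodule.span F {M | ∃ A ∈ B, ∃ T : Matrix (Fin k) (Fin ℓ) F, M = A ⊗ₖ T}

/-- `U ≤ F^n` is an `s`-shrunk subspace of `B` if `dim B(U) ≤ dim U − s`. -/
def IsShrunkSubspace {F : Type} [Field F] {n : ℕ}
    (B : Submodule F (Matrix (Fin n) (Fin n) F)) (U : Submodule F (Fin n → F)) (s : ℕ) : Prop :=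
  Module.finrank F (Submodule.span F {v | ∃ A ∈ B, ∃ u ∈ U, v = A.mulVec u}) + s ≤
    Module.finrank F U

/-- Rank factorization over a division ring, with one-sided inverses of both factors. -/
theorem exists_rank_factorization {D : Type*} [DivisionRing D] {m n : Type*} [Fintype m]
    [Fintype n] [DecidableEq m] [DecidableEq n] (X : Matrix m n D) :
    ∃ (ρ : ℕ) (Y : Matrix m (Fin ρ) D) (Z : Matrix (Fin ρ) n D) (Y' : Matrix (Fin ρ) m D)
      (Z' : Matrix n (Fin ρ) D), X = Y * Z ∧ Y' * Y = 1 ∧ Z * Z' = 1 := by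
  set f := X.toLinearMapRight' with hf
  set e := (Module.finBasis D (LinearMap.range f)).equivFun
  obtain ⟨g, hg⟩ := LinearMap.exists_rightInverse_of_surjective
    (e.toLinearMap ∘ₗ f.rangeRestrict) (by
      rw [LinearMap.range_comp, LinearMap.range_rangeRestrict, Submodule.map_top,
        LinearEquiv.range])
  obtain ⟨h, hh⟩ := LinearMap.exists_leftInverse_of_injective
    ((LinearMap.range f).subtype ∘ₗ e.symm.toLinearMap) (by
      rw [LinearMap.ker_eq_bot]
      exact (Submodule.subtype_injective _).comp e.symm.injective)
  refine ⟨_, Matrix.toLinearMapRight'.symm (e.toLinearMap ∘ₗ f.rangeRestrict),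
    Matrix.toLinearMapRight'.symm ((LinearMap.range f).subtype ∘ₗ e.symm.toLinearMap),
    Matrix.toLinearMapRight'.symm g, Matrix.toLinearMapRight'.symm h, ?_, ?_, ?_⟩
  · apply Matrix.toLinearMapRight'.injective
    rw [Matrix.toLinearMapRight'_mul]
    refine LinearMap.ext fun v => ?_
    simp [← hf]
  · apply Matrix.toLinearMapRight'.injective
    rw [Matrix.toLinearMapRight'_mul]
    simpa using hg
  · apply Matrix.toLinearMapRight'.injective
    rw [Matrix.toLinearMapRight'_mul]
    simpa using hh

theorem rank_eq_of_factorization {K : Type*} [Field K] {m n p : Type*} [Fintype m] [Fintype n]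
    [Fintype p] [DecidableEq p] {X : Matrix m n K} {Y : Matrix m p K} {Z : Matrix p n K}
    {Y' : Matrix p m K} {Z' : Matrix n p K} (hX : X = Y * Z) (hY : Y' * Y = 1)
    (hZ : Z * Z' = 1) : X.rank = Fintype.card p := by
  apply le_antisymm
  · rw [hX]
    exact (rank_mul_le_left _ _).trans (rank_le_card_width _)
  · have h : Y' * X * Z' = 1 := by
      rw [hX, ← Matrix.mul_assoc, hY, Matrix.one_mul, hZ]
    calc Fintype.card p = (Y' * X * Z').rank := by rw [h, rank_one]
      _ ≤ (Y' * X).rank := rank_mul_le_left _ _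
      _ ≤ X.rank := rank_mul_le_right _ _

theorem rank_map_ringHom {F K : Type*} [Field F] [Field K] {m n : Type*} [Fintype m] [Fintype n]
    (f : F →+* K) (X : Matrix m n F) : (X.map f).rank = X.rank := by
  classical
  obtain ⟨ρ, Y, Z, Y', Z', hX, hY, hZ⟩ := exists_rank_factorization X
  rw [rank_eq_of_factorization hX hY hZ]
  refine rank_eq_of_factorization (Y := Y.map f) (Z := Z.map f) (Y' := Y'.map f)
    (Z' := Z'.map f) ?_ ?_ ?_
  · rw [hX, Matrix.map_mul]
  · rw [← Matrix.map_mul, hY, Matrix.map_one _ (map_zero f) (map_one f)]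
  · rw [← Matrix.map_mul, hZ, Matrix.map_one _ (map_zero f) (map_one f)]

/-- Every matrix over a field has a generalized inverse. -/
theorem exists_generalized_inverse {K : Type*} [Field K] {m n : Type*} [Fintype m] [Fintype n]
    (A : Matrix m n K) : ∃ G : Matrix n m K, A * G * A = A := by
  classical
  obtain ⟨ρ, Y, Z, Y', Z', hX, hY, hZ⟩ := exists_rank_factorization A
  refine ⟨Z' * Y', ?_⟩
  calc A * (Z' * Y') * A = Y * (Z * Z') * (Y' * Y) * Z := by rw [hX]; simp only [Matrix.mul_assoc]
    _ = A := by rw [hY, hZ, hX]; simp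

theorem le_rank_iff_exists_det_ne_zero {K : Type*} [Field K] {m n : Type*} [Fintype m]
    [Fintype n] (A : Matrix m n K) (R : ℕ) :
    R ≤ A.rank ↔ ∃ (P : Matrix (Fin R) m K) (Q : Matrix n (Fin R) K), (P * A * Q).det ≠ 0 := by
  classical
  constructor
  · intro h
    obtain ⟨ρ, Y, Z, Y', Z', hX, hY, hZ⟩ := exists_rank_factorization A
    have hρ : R ≤ ρ := by
      rw [rank_eq_of_factorization hX hY hZ] at h
      simpa using h
    have hA : Y' * A * Z' = 1 := by
      rw [hX, ← Matrix.mul_assoc, hY, Matrix.one_mul, hZ]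
    refine ⟨Y'.submatrix (Fin.castLE hρ) id, Z'.submatrix id (Fin.castLE hρ), ?_⟩
    have : Y'.submatrix (Fin.castLE hρ) id * A * Z'.submatrix id (Fin.castLE hρ) =
        (Y' * A * Z').submatrix (Fin.castLE hρ) (Fin.castLE hρ) := by
      ext i j
      simp [Matrix.mul_apply]
    rw [this, hA, Matrix.submatrix_one _ (Fin.castLE_injective hρ), det_one]
    exact one_ne_zero
  · rintro ⟨P, Q, h⟩
    calc R = (P * A * Q).rank := by rw [rank_of_det_ne_zero h, Fintype.card_fin]
      _ ≤ (P * A).rank := rank_mul_le_left _ _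
      _ ≤ A.rank := rank_mul_le_right _ _

/-- If a line of matrices over an extension `K` of a large field `F` contains a matrix of
rank at least `R`, then so it does at a parameter from `F`. -/
theorem exists_le_rank_add_smul {F K : Type*} [Field F] [Field K] [Algebra F K] {m n : Type*}
    [Fintype m] [Fintype n] {R : ℕ} (hF : (R : Cardinal) < Cardinal.mk F)
    (A B : Matrix m n K) (t : K) (h : R ≤ (A + t • B).rank) :
    ∃ f : F, R ≤ (A + f • B).rank := by
  classical
  obtain ⟨P, Q, hPQ⟩ := (le_rank_iff_exists_det_ne_zero _ _).1 h
  set p : Polynomial K := (((Polynomial.X : Polynomial K) • (P * B * Q).map Polynomial.C) +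
    (P * A * Q).map Polynomial.C).det with hp
  have heval : ∀ x : K, p.eval x = (P * (A + x • B) * Q).det := by
    intro x
    rw [hp, ← Polynomial.coe_evalRingHom, RingHom.map_det]
    congr 1
    ext i j
    simp only [RingHom.mapMatrix_apply, Matrix.map_apply, Matrix.add_apply, Matrix.smul_apply,
      Matrix.mul_add, Matrix.add_mul, Matrix.mul_smul, Matrix.smul_mul, smul_eq_mul,
      Polynomial.coe_evalRingHom, Polynomial.eval_add, Polynomial.eval_mul, Polynomial.eval_X,
      Polynomial.eval_C]
    ring
  have hp0 : p ≠ 0 := by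
    rintro h0
    apply hPQ
    rw [← heval, h0, Polynomial.eval_zero]
  have hdeg : p.natDegree ≤ R := by
    exact (Polynomial.natDegree_det_X_add_C_le (P * B * Q) (P * A * Q)).trans_eq
      (Fintype.card_fin R)
  by_contra! hcon
  have hroot : ∀ f : F, algebraMap F K f ∈ p.roots.toFinset := by
    intro f
    rw [Multiset.mem_toFinset, Polynomial.mem_roots hp0, Polynomial.IsRoot.def, heval]
    by_contra hne
    have := (le_rank_iff_exists_det_ne_zero _ _).2 ⟨P, Q, hne⟩
    rw [algebraMap_smul] at this
    exact absurd this (not_le.2 (hcon f))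
  have hinj : Function.Injective (fun f : F => (⟨_, hroot f⟩ : p.roots.toFinset)) := by
    intro a b hab
    exact (algebraMap F K).injective (Subtype.ext_iff.1 hab)
  have : Finite F := Finite.of_injective _ hinj
  have hc := Nat.card_le_card_of_injective _ hinj
  rw [Nat.card_eq_fintype_card (α := p.roots.toFinset), Fintype.card_coe] at hc
  have h2 : Nat.card F ≤ R :=
    hc.trans ((Multiset.toFinset_card_le _).trans ((Polynomial.card_roots' p).trans hdeg))
  rw [← Nat.cast_card, Nat.cast_lt] at hF
  omega

/-- If the `K`-span of a set of matrices contains a matrix of rank at least `R`, then so does its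
`F`-span, for a large enough subfield `F`. -/
theorem exists_mem_span_le_rank {F K : Type*} [Field F] [Field K] [Algebra F K] {m n : Type*}
    [Fintype m] [Fintype n] {R : ℕ} (hF : (R : Cardinal) < Cardinal.mk F)
    (S : Set (Matrix m n K)) (M : Matrix m n K) (hM : M ∈ Submodule.span K S) (h : R ≤ M.rank) :
    ∃ M' ∈ Submodule.span F S, R ≤ M'.rank := by
  suffices H : ∀ Y : Matrix m n K, R ≤ (Y + M).rank →
      ∃ M' ∈ Submodule.span F S, R ≤ (Y + M').rank by
    simpa using H 0 (by rwa [zero_add])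
  clear h
  induction hM using Submodule.closure_induction with
  | zero => exact fun Y hY => ⟨0, zero_mem _, hY⟩
  | add x y _ _ hx hy =>
    intro Y hY
    obtain ⟨y', hy', h₁⟩ := hy (Y + x) (by rwa [add_assoc])
    obtain ⟨x', hx', h₂⟩ := hx (Y + y') (by rwa [add_right_comm])
    exact ⟨x' + y', add_mem hx' hy', by rwa [add_comm x', ← add_assoc]⟩
  | smul_mem c x hx =>
    intro Y hY
    obtain ⟨f, hf⟩ := exists_le_rank_add_smul hF Y x c hY
    exact ⟨f • x, Submodule.smul_mem _ _ (Submodule.subset_span hx), hf⟩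

/-- Flatten a matrix over `D` to a block matrix along a representation of `D`. -/
def flatten {D K : Type*} {m n k : Type*} (φ : D → Matrix k k K) (X : Matrix m n D) :
    Matrix (m × k) (n × k) K :=
  Matrix.of fun i j => φ (X i.1 j.1) i.2 j.2

theorem flatten_mul {D K : Type*} [Ring D] [Field K] {m n p k : Type*} [Fintype n] [Fintype k]
    [DecidableEq k] (φ : D →+* Matrix k k K) (X : Matrix m n D) (Y : Matrix n p D) :
    flatten φ (X * Y) = flatten φ X * flatten φ Y := by
  ext ⟨i, a⟩ ⟨j, b⟩
  simp [flatten, Matrix.mul_apply, Fintype.sum_prod_type, Matrix.sum_apply]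

theorem flatten_one {D K : Type*} [Ring D] [Field K] {m k : Type*} [DecidableEq m]
    [Fintype k] [DecidableEq k] (φ : D →+* Matrix k k K) :
    flatten φ (1 : Matrix m m D) = 1 := by
  ext ⟨i, a⟩ ⟨j, b⟩
  by_cases h : i = j <;> simp [flatten, Matrix.one_apply, h]

/-- Matrices over a division ring have flattened rank divisible by the degree of the
representation. -/
theorem dvd_rank_flatten {D K : Type*} [DivisionRing D] [Field K] {m n k : Type*} [Fintype m]
    [Fintype n] [Fintype k] [DecidableEq k] (φ : D →+* Matrix k k K) (X : Matrix m n D) :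
    Fintype.card k ∣ (flatten φ X).rank := by
  classical
  obtain ⟨ρ, Y, Z, Y', Z', hX, hY, hZ⟩ := exists_rank_factorization X
  rw [rank_eq_of_factorization (X := flatten φ X) (Y := flatten φ Y) (Z := flatten φ Z)
    (Y' := flatten φ Y') (Z' := flatten φ Z') (by rw [hX, flatten_mul])
    (by rw [← flatten_mul, hY, flatten_one]) (by rw [← flatten_mul, hZ, flatten_one]),
    Fintype.card_prod]
  exact dvd_mul_left _ _

/-- Coefficientwise application of an algebra homomorphism to Laurent series. -/
noncomputable def laurentMap {F L : Type*} [Field F] [Field L] [Algebra F L] (σ : L →ₐ[F] L) :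
    LaurentSeries L →ₐ[F] LaurentSeries L where
  toFun x := HahnSeries.map x σ
  map_one' := HahnSeries.map_one (σ : L →+* L).toMonoidWithZeroHom
  map_mul' _ _ := HahnSeries.map_mul (σ : L →ₙ+* L)
  map_zero' := HahnSeries.map_zero (σ : ZeroHom L L)
  map_add' _ _ := HahnSeries.map_add (σ : L →+ L)
  commutes' a := by
    rw [HahnSeries.algebraMap_apply', PowerSeries.algebraMap_apply, HahnSeries.ofPowerSeries_C]
    exact (HahnSeries.map_C _ (σ : L →+* L)).trans (by simp)

section CyclicTwist

variable {F L : Type*} [Field F] [Field L] [Algebra F L] (σ : L →ₐ[F] L) {m : ℕ}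

@[simp]
theorem laurentMap_coeff (x : LaurentSeries L) (i : ℤ) :
    (laurentMap σ x).coeff i = σ (x.coeff i) := rfl

theorem laurentMap_single (i : ℤ) (a : L) :
    laurentMap σ (HahnSeries.single i a) = HahnSeries.single i (σ a) :=
  HahnSeries.map_single (σ : ZeroHom L L)

theorem order_laurentMap (x : LaurentSeries L) : (laurentMap σ x).order = x.order := by
  by_cases hx : x = 0
  · rw [hx, map_zero]
  apply le_antisymm
  · apply HahnSeries.order_le_of_coeff_ne_zero
    rw [laurentMap_coeff, map_ne_zero]
    exact HahnSeries.coeff_order_eq_zero.not.2 hx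
  · apply HahnSeries.order_le_of_coeff_ne_zero
    rw [← map_ne_zero σ, ← laurentMap_coeff]
    exact HahnSeries.coeff_order_eq_zero.not.2 ((map_ne_zero _).2 hx)

variable (L) in
/-- The wrap-around weight of the cyclic shift matrix. -/
noncomputable def shiftWeight (i : Fin (m + 1)) : LaurentSeries L :=
  if i = 0 then HahnSeries.single 1 1 else 1

variable (L m) in
/-- The cyclic shift whose `(m + 1)`-st power is the Laurent variable. -/
noncomputable def shiftMatrix : Matrix (Fin (m + 1)) (Fin (m + 1)) (LaurentSeries L) :=
  Matrix.of fun i j => if i = j + 1 then shiftWeight L i else 0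

theorem shiftWeight_ne_zero (i : Fin (m + 1)) : shiftWeight L i ≠ 0 := by
  unfold shiftWeight
  split_ifs <;> simp

theorem order_shiftWeight (i : Fin (m + 1)) :
    (m + 1 : ℤ) * (shiftWeight L (i + 1)).order + ((i + 1 : Fin (m + 1)) : ℕ) = (i : ℕ) + 1 := by
  rcases Fin.eq_castSucc_or_eq_last i with ⟨j, rfl⟩ | rfl
  · rw [Fin.coeSucc_eq_succ, shiftWeight, if_neg (Fin.succ_ne_zero _)]
    simp
  · simp [shiftWeight]

theorem shiftMatrix_mul_apply (X : Matrix (Fin (m + 1)) (Fin (m + 1)) (LaurentSeries L))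
    (i j : Fin (m + 1)) :
    (shiftMatrix L m * X) (i + 1) j = shiftWeight L (i + 1) * X i j := by
  simp [shiftMatrix, Matrix.mul_apply]

theorem mul_shiftMatrix_apply (X : Matrix (Fin (m + 1)) (Fin (m + 1)) (LaurentSeries L))
    (i j : Fin (m + 1)) :
    (X * shiftMatrix L m) i j = X i (j + 1) * shiftWeight L (j + 1) := by
  simp [shiftMatrix, Matrix.mul_apply]

variable (m) in
/-- The cyclic algebra, as the matrices that commute with the shift up to the twist `σ`. -/
noncomputable def cyclicAlgebra :
    Subalgebra F (Matrix (Fin (m + 1)) (Fin (m + 1)) (LaurentSeries L)) where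
  carrier := {X | shiftMatrix L m * X = X.map (laurentMap σ) * shiftMatrix L m}
  mul_mem' {X Y} hX hY := by
    simp only [Set.mem_ofPred_eq] at hX hY ⊢
    rw [← Matrix.mul_assoc, hX, Matrix.mul_assoc, hY, Matrix.map_mul, Matrix.mul_assoc]
  add_mem' {X Y} hX hY := by
    simp only [Set.mem_ofPred_eq] at hX hY ⊢
    rw [Matrix.mul_add, hX, hY, Matrix.map_add _ (map_add _), Matrix.add_mul]
  algebraMap_mem' a := by
    have : (algebraMap F (Matrix (Fin (m + 1)) (Fin (m + 1)) (LaurentSeries L)) a).map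
        (laurentMap σ) = algebraMap F _ a := by
      rw [Matrix.algebraMap_eq_diagonal, Matrix.diagonal_map (map_zero _)]
      congr 1
      ext1 i
      exact (laurentMap σ).commutes a
    simp only [Set.mem_ofPred_eq, this]
    exact (Algebra.commutes a _).symm

theorem mem_cyclicAlgebra {X : Matrix (Fin (m + 1)) (Fin (m + 1)) (LaurentSeries L)} :
    X ∈ cyclicAlgebra σ m ↔
      shiftMatrix L m * X = X.map (laurentMap σ) * shiftMatrix L m := Iff.rfl

theorem mem_cyclicAlgebra_iff {X : Matrix (Fin (m + 1)) (Fin (m + 1)) (LaurentSeries L)} :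
    X ∈ cyclicAlgebra σ m ↔ ∀ i j, shiftWeight L (i + 1) * X i j =
      laurentMap σ (X (i + 1) (j + 1)) * shiftWeight L (j + 1) := by
  rw [mem_cyclicAlgebra]
  constructor
  · intro h i j
    rw [← shiftMatrix_mul_apply, h, mul_shiftMatrix_apply, Matrix.map_apply]
  · intro h
    ext1 i j
    obtain ⟨i, rfl⟩ : ∃ i', i = i' + 1 := ⟨i - 1, by simp⟩
    rw [shiftMatrix_mul_apply, h, mul_shiftMatrix_apply, Matrix.map_apply]

/-- Nonzero elements of the cyclic algebra act injectively. -/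
theorem mulVec_ne_zero_of_mem_cyclicAlgebra
    {X : Matrix (Fin (m + 1)) (Fin (m + 1)) (LaurentSeries L)} (hX : X ∈ cyclicAlgebra σ m)
    (hX0 : X ≠ 0) {v : Fin (m + 1) → LaurentSeries L} (hv : v ≠ 0) : X *ᵥ v ≠ 0 := by
  classical
  rw [mem_cyclicAlgebra_iff] at hX
  set ω : Fin (m + 1) → Fin (m + 1) → ℤ :=
    fun i j => (m + 1 : ℤ) * (X i j).order + (i : ℕ) - (j : ℕ) with hω
  have hstep : ∀ i j, X i j ≠ 0 → X (i + 1) (j + 1) ≠ 0 ∧ ω (i + 1) (j + 1) = ω i j := by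
    intro i j hij
    have h1 : laurentMap σ (X (i + 1) (j + 1)) ≠ 0 := by
      intro h0
      have := hX i j
      rw [h0, zero_mul] at this
      exact mul_ne_zero (shiftWeight_ne_zero _) hij this
    have h2 : X (i + 1) (j + 1) ≠ 0 := by
      rintro h0
      rw [h0, map_zero] at h1
      exact h1 rfl
    refine ⟨h2, ?_⟩
    have h3 := congrArg HahnSeries.order (hX i j)
    rw [HahnSeries.order_mul (shiftWeight_ne_zero _) hij,
      HahnSeries.order_mul h1 (shiftWeight_ne_zero _), order_laurentMap] at h3
    have h4 := order_shiftWeight (L := L) i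
    have h5 := order_shiftWeight (L := L) j
    simp only [hω]
    linear_combination (-(m + 1 : ℤ)) * h3 + h4 - h5
  obtain ⟨j₀, hj₀, hmin⟩ := Finset.exists_min_image
    (Finset.univ.filter fun j => v j ≠ 0) (fun j => (m + 1 : ℤ) * (v j).order + (j : ℕ)) (by
      obtain ⟨j, hj⟩ := Function.ne_iff.1 hv
      exact ⟨j, by simpa using hj⟩)
  obtain ⟨⟨p, q⟩, hpq, hpmin⟩ := Finset.exists_min_image
    (Finset.univ.filter fun pq : Fin (m + 1) × Fin (m + 1) => X pq.1 pq.2 ≠ 0)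
    (fun pq => ω pq.1 pq.2) (by
      by_contra hne
      apply hX0
      ext1 i j
      by_contra h0
      exact hne ⟨(i, j), by simpa using h0⟩)
  simp only [Finset.mem_filter, Finset.mem_univ, true_and] at hj₀ hmin hpq hpmin
  have hall : ∀ c : Fin (m + 1), X (p + c) (q + c) ≠ 0 ∧ ω (p + c) (q + c) = ω p q := by
    intro c
    induction c using Fin.induction with
    | zero => simpa using hpq
    | succ c ih =>
      rw [← Fin.coeSucc_eq_succ, ← add_assoc, ← add_assoc]
      exact ⟨(hstep _ _ ih.1).1, (hstep _ _ ih.1).2.trans ih.2⟩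
  obtain ⟨hi, hiω⟩ := hall (j₀ - q)
  rw [add_sub_cancel] at hi hiω
  set i₀ := p + (j₀ - q)
  intro h0
  have hcoeff := congrArg (fun w => (w i₀).coeff (X i₀ j₀ * v j₀).order) h0
  simp only [Matrix.mulVec, dotProduct, HahnSeries.coeff_sum, Pi.zero_apply,
    HahnSeries.coeff_zero] at hcoeff
  rw [Finset.sum_eq_single j₀] at hcoeff
  · exact mul_ne_zero hi hj₀ (HahnSeries.coeff_order_eq_zero.1 hcoeff)
  · intro j _ hj
    by_cases hXj : X i₀ j = 0
    · simp [hXj]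
    by_cases hvj : v j = 0
    · simp [hvj]
    apply HahnSeries.coeff_eq_zero_of_lt_order
    rw [HahnSeries.order_mul hXj hvj, HahnSeries.order_mul hi hj₀]
    have h1 := hpmin (i₀, j) hXj
    rw [← hiω] at h1
    simp only [hω] at h1
    have h2 := hmin j hvj
    have h3 : (m + 1 : ℤ) * (v j₀).order + (j₀ : ℕ) ≠ (m + 1 : ℤ) * (v j).order + (j : ℕ) := by
      intro h
      apply hj
      have := congrArg (· % (m + 1 : ℤ)) h
      simp only [Int.mul_add_emod_self_left] at this
      rw [Int.emod_eq_of_lt (by omega) (by omega), Int.emod_eq_of_lt (by omega) (by omega)] at this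
      exact Fin.ext (by omega)
    have h4 := lt_of_le_of_ne h2 h3
    have h5 : (0 : ℤ) < m + 1 := by positivity
    nlinarith
  · simp

theorem exists_inverse_mem_cyclicAlgebra
    {X : Matrix (Fin (m + 1)) (Fin (m + 1)) (LaurentSeries L)} (hX : X ∈ cyclicAlgebra σ m)
    (hX0 : X ≠ 0) : ∃ Y ∈ cyclicAlgebra σ m, X * Y = 1 ∧ Y * X = 1 := by
  have hdet : IsUnit X.det := by
    rw [isUnit_iff_ne_zero]
    intro hd
    obtain ⟨v, hv, hXv⟩ := Matrix.exists_mulVec_eq_zero_iff.2 hd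
    exact mulVec_ne_zero_of_mem_cyclicAlgebra σ hX hX0 hv hXv
  refine ⟨X⁻¹, ?_, Matrix.mul_nonsing_inv _ hdet, Matrix.nonsing_inv_mul _ hdet⟩
  rw [mem_cyclicAlgebra] at hX ⊢
  have h1 : X⁻¹.map (laurentMap σ) * X.map (laurentMap σ) = 1 := by
    rw [← Matrix.map_mul, Matrix.nonsing_inv_mul _ hdet,
      Matrix.map_one _ (map_zero _) (map_one _)]
  calc shiftMatrix L m * X⁻¹
      = X⁻¹.map (laurentMap σ) * X.map (laurentMap σ) * shiftMatrix L m * X⁻¹ := by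
        rw [h1, Matrix.one_mul]
    _ = X⁻¹.map (laurentMap σ) * (shiftMatrix L m * X) * X⁻¹ := by
        rw [hX, Matrix.mul_assoc (X⁻¹.map _)]
    _ = X⁻¹.map (laurentMap σ) * shiftMatrix L m * (X * X⁻¹) := by
        simp only [Matrix.mul_assoc]
    _ = _ := by rw [Matrix.mul_nonsing_inv _ hdet, Matrix.mul_one]

theorem span_cyclicAlgebra {x : Fin (m + 1) → L} (hx : Function.Injective x)
    (hσ : ∀ i, σ (x (i + 1)) = x i) :
    Submodule.span (LaurentSeries L)
      (cyclicAlgebra σ m : Set (Matrix (Fin (m + 1)) (Fin (m + 1)) (LaurentSeries L))) = ⊤ := by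
  classical
  set ρ : Fin (m + 1) → Fin (m + 1) → LaurentSeries L :=
    fun i j => if i < j then HahnSeries.single 1 1 else 1 with hρ
  have hρ0 : ∀ i j, ρ i j ≠ 0 := by
    intro i j
    simp only [hρ]
    split_ifs <;> simp
  have hρσ : ∀ i j, laurentMap σ (ρ i j) = ρ i j := by
    intro i j
    simp only [hρ]
    split_ifs <;> simp [laurentMap_single]
  have hρτ : ∀ i j, shiftWeight L (i + 1) * ρ i j = ρ (i + 1) (j + 1) * shiftWeight L (j + 1) := by
    intro i j
    rcases Fin.eq_castSucc_or_eq_last i with ⟨i, rfl⟩ | rfl <;>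
    rcases Fin.eq_castSucc_or_eq_last j with ⟨j, rfl⟩ | rfl
    · simp [shiftWeight, hρ, Fin.coeSucc_eq_succ]
    · simp [shiftWeight, hρ, Fin.coeSucc_eq_succ, Fin.castSucc_lt_last]
    · simp [shiftWeight, hρ, Fin.coeSucc_eq_succ, Fin.not_lt.2 (Fin.le_last _)]
    · simp [shiftWeight, hρ]
  set y : Fin (m + 1) → LaurentSeries L := fun i => HahnSeries.single 0 (x i) with hy
  have hyinj : Function.Injective y := (HahnSeries.single_injective 0).comp hx
  have hyσ : ∀ i, laurentMap σ (y (i + 1)) = y i := by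
    intro i
    simp [hy, laurentMap_single, hσ]
  set b : Fin (m + 1) → Fin (m + 1) → Matrix (Fin (m + 1)) (Fin (m + 1)) (LaurentSeries L) :=
    fun e c => Matrix.of fun i j => if i = j + c then y i ^ (e : ℕ) * ρ i j else 0 with hb
  have hbmem : ∀ e c, b e c ∈ cyclicAlgebra σ m := by
    intro e c
    rw [mem_cyclicAlgebra_iff]
    intro i j
    have hiff : i + 1 = j + 1 + c ↔ i = j + c := by
      rw [add_right_comm, add_left_inj]
    simp only [hb, Matrix.of_apply, hiff]
    split_ifs
    · rw [map_mul, map_pow, hyσ, hρσ, mul_left_comm, hρτ, mul_assoc]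
    · simp
  have hV : IsUnit (vandermonde y).det :=
    isUnit_iff_ne_zero.2 (det_vandermonde_ne_zero_iff.2 hyinj)
  rw [eq_top_iff]
  intro M _
  rw [Matrix.matrix_eq_sum_single M]
  refine Submodule.sum_mem _ fun i _ => Submodule.sum_mem _ fun j _ => ?_
  have key : Matrix.single i j (M i j) =
      ∑ e, (M i j * (ρ i j)⁻¹ * (vandermonde y)⁻¹ e i) • b e (i - j) := by
    ext1 p q
    have h1 := congrFun (congrFun (Matrix.mul_nonsing_inv _ hV) p) i
    simp only [Matrix.mul_apply, vandermonde_apply] at h1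
    simp only [Matrix.sum_apply, Matrix.smul_apply, hb, Matrix.of_apply, smul_eq_mul]
    by_cases hpq : p = q + (i - j)
    · simp only [if_pos hpq]
      have : ∀ e : Fin (m + 1), M i j * (ρ i j)⁻¹ * (vandermonde y)⁻¹ e i *
          (y p ^ (e : ℕ) * ρ p q) =
          (y p ^ (e : ℕ) * (vandermonde y)⁻¹ e i) * (M i j * (ρ i j)⁻¹ * ρ p q) := by
        intro e
        ring
      rw [Finset.sum_congr rfl fun e _ => this e, ← Finset.sum_mul, h1]
      by_cases hpi : p = i
      · subst hpi
        have hq : q = j := by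
          have : q + (p - j) = j + (p - j) := by rw [← hpq, add_sub_cancel]
          exact add_right_cancel this
        subst hq
        rw [Matrix.single_apply_same, Matrix.one_apply_eq, one_mul, mul_assoc,
          inv_mul_cancel₀ (hρ0 _ _), mul_one]
      · rw [Matrix.one_apply_ne hpi, zero_mul, Matrix.single_apply_of_ne]
        exact fun h => hpi h.1.symm
    · simp only [if_neg hpq, mul_zero, Finset.sum_const_zero]
      rw [Matrix.single_apply_of_ne]
      rintro ⟨rfl, rfl⟩
      exact hpq (by rw [add_sub_cancel])
  rw [key]
  exact Submodule.sum_mem _ fun e _ =>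
    Submodule.smul_mem _ _ (Submodule.subset_span (hbmem e _))

end CyclicTwist

/-- Over some extension of `F` there is a division `F`-algebra of full-degree matrices that spans
the whole matrix algebra. -/
theorem exists_spanning_division_subalgebra (F : Type) [Field F] (m : ℕ) :
    ∃ (K : Type) (_ : Field K) (_ : Algebra F K)
      (D : Subalgebra F (Matrix (Fin (m + 1)) (Fin (m + 1)) K)),
      (∀ X ∈ D, X ≠ 0 → ∃ Y ∈ D, X * Y = 1 ∧ Y * X = 1) ∧
      Submodule.span K (D : Set (Matrix (Fin (m + 1)) (Fin (m + 1)) K)) = ⊤ := by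
  let P := MvPolynomial (Fin (m + 1)) F
  let L := FractionRing P
  let s : P →ₐ[F] P := MvPolynomial.rename (fun i => i - 1)
  have hs : Function.Injective s := MvPolynomial.rename_injective _ (sub_left_injective)
  have hsL : Function.Injective ((IsScalarTower.toAlgHom F P L).comp s) :=
    (IsFractionRing.injective P L).comp hs
  let σ : L →ₐ[F] L := IsFractionRing.liftAlgHom hsL
  refine ⟨LaurentSeries L, inferInstance, inferInstance, cyclicAlgebra σ m,
    fun X hX h0 => exists_inverse_mem_cyclicAlgebra σ hX h0,
    span_cyclicAlgebra σ (x := fun i => algebraMap P L (MvPolynomial.X i)) ?_ ?_⟩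
  · exact (IsFractionRing.injective P L).comp (MvPolynomial.X_injective)
  · intro i
    exact (IsFractionRing.lift_algebraMap hsL _).trans (congrArg (algebraMap P L)
      ((MvPolynomial.rename_X _ _).trans (by rw [add_sub_cancel_right])))

/-- Regularity: a rank in the `(k, k)`-blow-up above a multiple of `k` can be raised to the next
multiple of `k`. -/
theorem exists_mem_blowUp_succ_mul_le_rank {F : Type} [Field F] {n k r : ℕ}
    (B : Submodule F (Matrix (Fin n) (Fin n) F)) (hk : 0 < k)
    (hF : ((n * k : ℕ) : Cardinal) < Cardinal.mk F) {M : Matrix (Fin n × Fin k) (Fin n × Fin k) F}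
    (hM : M ∈ blowUp B k k) (hr : r * k < M.rank) :
    ∃ M' ∈ blowUp B k k, (r + 1) * k ≤ M'.rank := by
  obtain ⟨m, rfl⟩ : ∃ m, k = m + 1 := ⟨k - 1, by omega⟩
  obtain ⟨K, _, _, D, hD, hspan⟩ := exists_spanning_division_subalgebra F m
  set ι := algebraMap F K
  have hcard : ∀ X : Matrix (Fin n × Fin (m + 1)) (Fin n × Fin (m + 1)) K,
      ((X.rank : ℕ) : Cardinal) < Cardinal.mk F := fun X =>
    lt_of_le_of_lt (Nat.cast_le.2 ((rank_le_card_width X).trans_eq (by simp))) hF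
  set S : Set (Matrix (Fin n × Fin (m + 1)) (Fin n × Fin (m + 1)) K) :=
    {X | ∃ A ∈ B, ∃ T ∈ D, X = A.map ι ⊗ₖ T}
  set S₀ : Set (Matrix (Fin n × Fin (m + 1)) (Fin n × Fin (m + 1)) K) :=
    {X | ∃ A ∈ B, ∃ T : Matrix (Fin (m + 1)) (Fin (m + 1)) F, X = A.map ι ⊗ₖ T.map ι}
  have hMS : M.map ι ∈ Submodule.span K S := by
    have hgen : ∀ A ∈ B, ∀ T : Matrix (Fin (m + 1)) (Fin (m + 1)) K,
        A.map ι ⊗ₖ T ∈ Submodule.span K S := by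
      intro A hA T
      have hT : T ∈ Submodule.span K
          (D : Set (Matrix (Fin (m + 1)) (Fin (m + 1)) K)) := hspan ▸ Submodule.mem_top
      induction hT using Submodule.span_induction with
      | mem T hT => exact Submodule.subset_span ⟨A, hA, T, hT, rfl⟩
      | zero => rw [kronecker_zero]; exact zero_mem _
      | add T T' _ _ h h' => rw [kronecker_add]; exact add_mem h h'
      | smul c T _ h => rw [kronecker_smul]; exact Submodule.smul_mem _ _ h
    clear hr
    induction hM using Submodule.span_induction with
    | mem X hX =>
      obtain ⟨A, hA, T, rfl⟩ := hX
      convert hgen A hA (T.map ι) using 1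
      ext i j
      simp [kroneckerMap_apply]
    | zero => rw [Matrix.map_zero _ (map_zero _)]; exact zero_mem _
    | add X Y _ _ h h' =>
      rw [Matrix.map_add _ (map_add ι)]
      exact add_mem h h'
    | smul c X _ h =>
      have : (c • X).map ι = ι c • X.map ι := by ext; simp
      rw [this]
      exact Submodule.smul_mem _ _ h
  obtain ⟨N, hN, hNr⟩ := exists_mem_span_le_rank (F := F) (hcard _) S _ hMS le_rfl
  rw [rank_map_ringHom] at hNr
  have hflat : ∃ X : Matrix (Fin n) (Fin n) D, N = flatten D.val X := by
    clear hNr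
    induction hN using Submodule.span_induction with
    | mem X hX =>
      obtain ⟨A, hA, T, hT, rfl⟩ := hX
      refine ⟨Matrix.of fun i j => A i j • ⟨T, hT⟩, ?_⟩
      ext i j
      simpa [flatten, kroneckerMap_apply] using (Algebra.smul_def _ _).symm
    | zero => exact ⟨0, by ext; simp [flatten]⟩
    | add X Y _ _ h h' =>
      obtain ⟨X', rfl⟩ := h
      obtain ⟨Y', rfl⟩ := h'
      exact ⟨X' + Y', by ext; simp [flatten]⟩
    | smul c X _ h =>
      obtain ⟨X', rfl⟩ := h
      exact ⟨c • X', by ext; simp [flatten]⟩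
  have hdvd : m + 1 ∣ N.rank := by
    obtain ⟨X, rfl⟩ := hflat
    let _ : DivisionRing D := DivisionRing.ofIsUnitOrEqZero fun a => by
      by_cases ha : a = 0
      · exact Or.inr ha
      obtain ⟨Y, hY, h₁, h₂⟩ := hD a a.2 (fun h => ha (Subtype.ext h))
      exact Or.inl ⟨⟨a, ⟨Y, hY⟩, Subtype.ext h₁, Subtype.ext h₂⟩, rfl⟩
    simpa using dvd_rank_flatten (D := D) (D.val : D →+* Matrix (Fin (m + 1)) (Fin (m + 1)) K) X
  have hNrank : (r + 1) * (m + 1) ≤ N.rank := by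
    obtain ⟨c, hc⟩ := hdvd
    rw [hc] at hNr ⊢
    have : r < c := by
      by_contra! hcr
      have := Nat.mul_le_mul_left (m + 1) hcr
      linarith [mul_comm r (m + 1)]
    nlinarith
  have hNS : N ∈ Submodule.span K S₀ := by
    have hle : Submodule.span F S ≤ (Submodule.span K S₀).restrictScalars F := by
      rw [Submodule.span_le]
      rintro _ ⟨A, hA, T, -, rfl⟩
      change A.map ι ⊗ₖ T ∈ Submodule.span K S₀
      have : A.map ι ⊗ₖ T = ∑ i, ∑ j, T i j • (A.map ι ⊗ₖ (Matrix.single i j (1 : F)).map ι) := by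
        ext ⟨p, i⟩ ⟨q, j⟩
        simp [Matrix.sum_apply, kroneckerMap_apply, Matrix.single_apply, ite_and,
          mul_comm]
      rw [this]
      exact Submodule.sum_mem _ fun i _ => Submodule.sum_mem _ fun j _ =>
        Submodule.smul_mem _ _ (Submodule.subset_span ⟨A, hA, _, rfl⟩)
    exact hle hN
  obtain ⟨N', hN', hN'r⟩ := exists_mem_span_le_rank (F := F) (hcard _) S₀ _ hNS le_rfl
  have hdesc : ∃ M' ∈ blowUp B (m + 1) (m + 1), N' = M'.map ι := by
    clear hN'r
    induction hN' using Submodule.span_induction with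
    | mem X hX =>
      obtain ⟨A, hA, T, rfl⟩ := hX
      refine ⟨A ⊗ₖ T, Submodule.subset_span ⟨A, hA, T, rfl⟩, ?_⟩
      ext i j
      simp [kroneckerMap_apply]
    | zero => exact ⟨0, zero_mem _, by ext; simp⟩
    | add X Y _ _ h h' =>
      obtain ⟨X', hX', rfl⟩ := h
      obtain ⟨Y', hY', rfl⟩ := h'
      exact ⟨X' + Y', add_mem hX' hY', by ext; simp⟩
    | smul c X _ h =>
      obtain ⟨X', hX', rfl⟩ := h
      exact ⟨c • X', Submodule.smul_mem _ _ hX', by ext; simpa using Algebra.smul_def _ _⟩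
  obtain ⟨M', hM', rfl⟩ := hdesc
  rw [rank_map_ringHom] at hN'r
  exact ⟨M', hM', hNrank.trans hN'r⟩

theorem rank_kronecker_one {K : Type*} [Field K] {m n p : Type*} [Fintype m] [Fintype n]
    [Fintype p] [DecidableEq p] (A : Matrix m n K) :
    (A ⊗ₖ (1 : Matrix p p K)).rank = A.rank * Fintype.card p := by
  classical
  obtain ⟨ρ, Y, Z, Y', Z', hX, hY, hZ⟩ := exists_rank_factorization A
  rw [rank_eq_of_factorization hX hY hZ, ← Fintype.card_prod]
  refine rank_eq_of_factorization (Y := Y ⊗ₖ (1 : Matrix p p K)) (Z := Z ⊗ₖ (1 : Matrix p p K))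
    (Y' := Y' ⊗ₖ (1 : Matrix p p K)) (Z' := Z' ⊗ₖ (1 : Matrix p p K)) ?_ ?_ ?_
  · rw [← mul_kronecker_mul, ← hX, Matrix.one_mul]
  · rw [← mul_kronecker_mul, hY, Matrix.one_mul, one_kronecker_one]
  · rw [← mul_kronecker_mul, hZ, Matrix.one_mul, one_kronecker_one]

/-- If adding `C` to `A` does not raise the rank, then the perturbation vanishes from the kernel of
`A` to the cokernel of `A`. -/
theorem mul_eq_zero_of_rank_add_le {K : Type*} [Field K] {m : Type*} [Fintype m] [DecidableEq m]
    {A C G P : Matrix m m K} (hG : A * G * A = A) (hP : (1 + G * C) * P = 1)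
    (hrank : (A + C).rank ≤ A.rank) : (1 - A * G) * C * P * (1 - G * A) = 0 := by
  set E := (1 - A * G) * C * P with hE
  have hAE : (A + C) * P = A + E := by
    calc (A + C) * P = A * ((1 + G * C) * P) + (1 - A * G) * C * P := by noncomm_ring
      _ = A + E := by rw [hP, Matrix.mul_one]
  have hGE : A * G * (A + E) = A := by
    calc A * G * (A + E) = A * G * A + (A * G - A * G * A * G) * C * P := by
          rw [hE]; noncomm_ring
      _ = A := by rw [hG]; simp
  have hle : LinearMap.ker (A + E).mulVecLin ≤ LinearMap.ker A.mulVecLin := by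
    intro v hv
    rw [LinearMap.mem_ker, mulVecLin_apply] at hv ⊢
    rw [← hGE, ← mulVec_mulVec, hv, mulVec_zero]
  have hr : (A + E).rank ≤ A.rank := by
    rw [← hAE]
    exact (rank_mul_le_left _ _).trans hrank
  have hker : LinearMap.ker (A + E).mulVecLin = LinearMap.ker A.mulVecLin := by
    apply Submodule.eq_of_le_of_finrank_le hle
    have h1 := LinearMap.finrank_range_add_finrank_ker A.mulVecLin
    have h2 := LinearMap.finrank_range_add_finrank_ker (A + E).mulVecLin
    simp only [Matrix.rank] at hr
    omega
  rw [← Matrix.toLin'.injective.eq_iff, map_zero]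
  refine LinearMap.ext fun v => ?_
  have hv : (1 - G * A) *ᵥ v ∈ LinearMap.ker A.mulVecLin := by
    rw [LinearMap.mem_ker, mulVecLin_apply, mulVec_mulVec, Matrix.mul_sub, Matrix.mul_one,
      ← Matrix.mul_assoc, hG, sub_self, zero_mulVec]
  have hv' := hv
  rw [← hker] at hv'
  rw [LinearMap.mem_ker, mulVecLin_apply] at hv hv'
  rw [add_mulVec, hv, zero_add, mulVec_mulVec] at hv'
  exact (Matrix.toLin'_apply _ _).trans (hv'.trans (LinearMap.zero_apply v).symm)

/-- If `(1 - AG) M (GM)^j (1 - GA) ≠ 0` for some `j`, then `A + f M` has larger rank than `A` for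
some scalar `f`. -/
theorem exists_rank_lt_rank_add_smul {F : Type*} [Field F] {m : Type*} [Fintype m] [DecidableEq m]
    {A M G : Matrix m m F} (hG : A * G * A = A)
    (hF : ((A.rank + 1 : ℕ) : Cardinal) < Cardinal.mk F) {j : ℕ}
    (hj : (1 - A * G) * M * (G * M) ^ j * (1 - G * A) ≠ 0) :
    ∃ f : F, A.rank < (A + f • M).rank := by
  by_contra! hcon
  let a : F →+* PowerSeries F := algebraMap F (PowerSeries F)
  let K := FractionRing (PowerSeries F)
  let ι : PowerSeries F →+* K := algebraMap (PowerSeries F) K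
  have hιinj : Function.Injective ι := IsFractionRing.injective _ _
  have hιa : algebraMap F K = ι.comp a := IsScalarTower.algebraMap_eq F (PowerSeries F) K
  let am : Matrix m m F →+* Matrix m m (PowerSeries F) := a.mapMatrix
  let ιm : Matrix m m (PowerSeries F) →+* Matrix m m K := ι.mapMatrix
  let ev : Matrix m m (PowerSeries F) →+* Matrix m m F :=
    (PowerSeries.constantCoeff (R := F)).mapMatrix
  have hιm : Function.Injective ιm := Matrix.map_injective hιinj
  have hev : ∀ Y, ev (am Y) = Y := by
    intro Y
    ext i j
    simp [ev, am, a]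
  have hevX : ∀ Y : Matrix m m (PowerSeries F), ev ((PowerSeries.X : PowerSeries F) • Y) = 0 := by
    intro Y
    ext i j
    simp [ev]
  have hrank : (ιm (am A) + ι PowerSeries.X • ιm (am M)).rank ≤ (ιm (am A)).rank := by
    have hmap : ∀ Y, ιm (am Y) = Y.map (algebraMap F K) := by
      intro Y
      rw [hιa]
      rfl
    simp only [hmap]
    rw [rank_map_ringHom]
    by_contra! hlt
    obtain ⟨f, hf⟩ := exists_le_rank_add_smul (R := A.rank + 1) hF _ _ _ hlt
    have : A.map (algebraMap F K) + f • M.map (algebraMap F K) =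
        (A + f • M).map (algebraMap F K) := by
      ext i j
      simpa using Algebra.smul_def _ _
    rw [this, rank_map_ringHom] at hf
    exact absurd hf (not_le.2 (Nat.lt_succ_of_le (hcon f)))
  have hunit : IsUnit (1 + (PowerSeries.X : PowerSeries F) • am (G * M)).det := by
    rw [PowerSeries.isUnit_iff_constantCoeff, RingHom.map_det]
    change IsUnit (ev _).det
    rw [map_add, hevX, add_zero, map_one, det_one]
    exact isUnit_one
  set P := (1 + (PowerSeries.X : PowerSeries F) • am (G * M))⁻¹
  have hP1 : (1 + (PowerSeries.X : PowerSeries F) • am (G * M)) * P = 1 :=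
    Matrix.mul_nonsing_inv _ hunit
  have hP2 : P = 1 - (PowerSeries.X : PowerSeries F) • (P * am (G * M)) := by
    have h := Matrix.nonsing_inv_mul _ hunit
    change P * _ = 1 at h
    rw [Matrix.mul_add, Matrix.mul_one, Matrix.mul_smul] at h
    exact eq_sub_of_add_eq h
  have hιsmul : ∀ (c : PowerSeries F) Y, ιm (c • Y) = ι c • ιm Y := by
    intro c Y
    ext i j
    simp [ιm]
  have hcancel : ∀ Y : Matrix m m (PowerSeries F),
      (PowerSeries.X : PowerSeries F) • Y = 0 → Y = 0 := by
    intro Y hY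
    exact (smul_eq_zero.1 hY).resolve_left PowerSeries.X_ne_zero
  have hbase : am ((1 - A * G) * M) * P * am (1 - G * A) = 0 := by
    have h := mul_eq_zero_of_rank_add_le (A := ιm (am A)) (C := ι PowerSeries.X • ιm (am M))
      (G := ιm (am G)) (P := ιm P) (by simp only [← map_mul, hG])
      (by simpa only [map_mul, map_add, map_one, hιsmul, Matrix.mul_smul] using congrArg ιm hP1)
      hrank
    apply hcancel
    apply hιm
    rw [map_zero, ← h]
    simp only [hιsmul, map_mul, map_sub, map_one, Matrix.mul_smul, Matrix.smul_mul]
  have hind : ∀ i, am ((1 - A * G) * M) * P * am ((G * M) ^ i * (1 - G * A)) = 0 ∧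
      (1 - A * G) * M * (G * M) ^ i * (1 - G * A) = 0 := by
    have hsplit : ∀ Y, am ((1 - A * G) * M) * P * am Y = am ((1 - A * G) * M * Y) -
        (PowerSeries.X : PowerSeries F) • (am ((1 - A * G) * M) * P * am (G * M * Y)) := by
      intro Y
      conv_lhs => rw [hP2]
      rw [Matrix.mul_sub, Matrix.sub_mul, Matrix.mul_one, Matrix.mul_smul, Matrix.smul_mul,
        ← map_mul, map_mul am (G * M) Y]
      simp only [Matrix.mul_assoc]
    have hzero : ∀ Y, am ((1 - A * G) * M) * P * am Y = 0 →
        (1 - A * G) * M * Y = 0 ∧ am ((1 - A * G) * M) * P * am (G * M * Y) = 0 := by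
      intro Y hY
      rw [hsplit] at hY
      have h1 : (1 - A * G) * M * Y = 0 := by
        have := congrArg ev hY
        rwa [map_sub, hev, hevX, sub_zero, map_zero] at this
      refine ⟨h1, hcancel _ ?_⟩
      rwa [h1, map_zero, zero_sub, neg_eq_zero] at hY
    intro i
    induction i with
    | zero =>
      have h : am ((1 - A * G) * M) * P * am ((G * M) ^ 0 * (1 - G * A)) = 0 := by
        rwa [pow_zero, one_mul]
      exact ⟨h, by rw [mul_assoc _ (_ ^ _)]; exact (hzero _ h).1⟩
    | succ i ih =>
      have h : am ((1 - A * G) * M) * P * am ((G * M) ^ (i + 1) * (1 - G * A)) = 0 := by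
        rw [pow_succ', mul_assoc (G * M)]
        exact (hzero _ ih.1).2
      exact ⟨h, by rw [mul_assoc _ (_ ^ _)]; exact (hzero _ h).1⟩
  exact hj (hind j).2

section Wong

variable {F : Type} [Field F] {n d : ℕ}

/-- The span of the images of `U` under the matrices in `B`. -/
def imageSpan (B : Submodule F (Matrix (Fin n) (Fin n) F)) (U : Submodule F (Fin n → F)) :
    Submodule F (Fin n → F) :=
  Submodule.span F {v | ∃ A ∈ B, ∃ u ∈ U, v = A.mulVec u}

/-- The span of the `Fin d`-slices of the vectors in `V`. -/
def sliceSpan (V : Submodule F (Fin n × Fin d → F)) : Submodule F (Fin n → F) :=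
  Submodule.span F {w | ∃ v ∈ V, ∃ c, w = fun a => v (a, c)}

variable (d) in
/-- The vectors all of whose `Fin d`-slices lie in `W`. -/
def sliceLift (W : Submodule F (Fin n → F)) : Submodule F (Fin n × Fin d → F) where
  carrier := {v | ∀ c, (fun a => v (a, c)) ∈ W}
  add_mem' hv hw c := W.add_mem (hv c) (hw c)
  zero_mem' _ := W.zero_mem
  smul_mem' t _ hv c := W.smul_mem t (hv c)

theorem finrank_sliceLift (W : Submodule F (Fin n → F)) :
    Module.finrank F (sliceLift d W) = d * Module.finrank F W := by
  let e : sliceLift d W ≃ₗ[F] (Fin d → W) :=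
    { toFun := fun v c => ⟨fun a => v.1 (a, c), v.2 c⟩
      map_add' := fun _ _ => rfl
      map_smul' := fun _ _ => rfl
      invFun := fun w => ⟨fun p => (w p.2).1 p.1, fun c => (w c).2⟩
      left_inv := fun _ => rfl
      right_inv := fun _ => rfl }
  rw [e.finrank_eq, Module.finrank_pi_fintype, Finset.sum_const, Finset.card_univ,
    Fintype.card_fin, smul_eq_mul]

theorem le_sliceLift_sliceSpan (V : Submodule F (Fin n × Fin d → F)) :
    V ≤ sliceLift d (sliceSpan V) :=
  fun v hv c => Submodule.subset_span ⟨v, hv, c, rfl⟩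

theorem imageSpan_mono (B : Submodule F (Matrix (Fin n) (Fin n) F)) : Monotone (imageSpan B) :=
  fun _ _ h => Submodule.span_mono fun _ ⟨A, hA, u, hu, e⟩ => ⟨A, hA, u, h hu, e⟩

theorem sliceSpan_mono : Monotone (sliceSpan (F := F) (n := n) (d := d)) :=
  fun _ _ h => Submodule.span_mono fun _ ⟨v, hv, c, e⟩ => ⟨v, h hv, c, e⟩

theorem sliceLift_mono : Monotone (sliceLift (F := F) (n := n) d) :=
  fun _ _ h _ hv c => h (hv c)

variable (F n) in
/-- The vector supported on slice `c` with value `w` there. -/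
def sliceSingle (c : Fin d) : (Fin n → F) →ₗ[F] (Fin n × Fin d → F) where
  toFun w p := if p.2 = c then w p.1 else 0
  map_add' v w := by ext p; by_cases h : p.2 = c <;> simp [h]
  map_smul' t w := by ext p; by_cases h : p.2 = c <;> simp [h]

theorem sliceLift_imageSpan_le (B : Submodule F (Matrix (Fin n) (Fin n) F))
    (V : Submodule F (Fin n × Fin d → F)) :
    sliceLift d (imageSpan B (sliceSpan V)) ≤
      Submodule.span F {w | ∃ C ∈ blowUp B d d, ∃ v ∈ V, w = C *ᵥ v} := by
  set S := Submodule.span F {w | ∃ C ∈ blowUp B d d, ∃ v ∈ V, w = C *ᵥ v}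
  have h1 : ∀ c, ∀ A ∈ B, ∀ u ∈ sliceSpan V, sliceSingle F n c (A *ᵥ u) ∈ S := by
    intro c A hA u hu
    have hle : sliceSpan V ≤ S.comap (sliceSingle F n c ∘ₗ A.mulVecLin) := by
      refine Submodule.span_le.2 ?_
      rintro _ ⟨v, hv, c', rfl⟩
      refine Submodule.subset_span ⟨A ⊗ₖ Matrix.single c c' 1,
        Submodule.subset_span ⟨A, hA, _, rfl⟩, v, hv, ?_⟩
      ext ⟨a, b⟩
      by_cases hb : b = c
      · subst hb
        simp [sliceSingle, mulVec, dotProduct, kroneckerMap_apply, Fintype.sum_prod_type,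
          Matrix.single_apply]
      · simp [sliceSingle, mulVec, dotProduct, kroneckerMap_apply, hb, Ne.symm hb]
    exact hle hu
  have h2 : ∀ c, imageSpan B (sliceSpan V) ≤ S.comap (sliceSingle F n c) := by
    intro c
    refine Submodule.span_le.2 ?_
    rintro _ ⟨A, hA, u, hu, rfl⟩
    exact h1 c A hA u hu
  intro v hv
  have hsum : v = ∑ c, sliceSingle F n c (fun a => v (a, c)) := by
    ext p
    simp [sliceSingle]
  rw [hsum]
  exact Submodule.sum_mem _ fun c _ => h2 c (hv c)

/-- The alternating product `C j * G * C (j - 1) * ⋯ * G * C 0 * R`. -/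
def alternatingProd {m : Type*} [Fintype m] (G R : Matrix m m F) (C : ℕ → Matrix m m F) :
    ℕ → Matrix m m F
  | 0 => C 0 * R
  | j + 1 => C (j + 1) * G * alternatingProd G R C j

theorem alternatingProd_congr {m : Type*} [Fintype m] (G R : Matrix m m F)
    {C C' : ℕ → Matrix m m F} {j : ℕ} (h : ∀ i ≤ j, C i = C' i) :
    alternatingProd G R C j = alternatingProd G R C' j := by
  induction j with
  | zero => simp [alternatingProd, h 0 le_rfl]
  | succ j ih => rw [alternatingProd, alternatingProd, h _ le_rfl, ih fun i hi => h i (by omega)]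

/-- Either the second Wong sequence of `A` stays in the image of `A` and produces a shrunk subspace,
or it leaves the image after at most `r + 1` steps. -/
theorem exists_shrunk_or_alternatingProd_ne_zero (B : Submodule F (Matrix (Fin n) (Fin n) F))
    {r : ℕ} (hd : 0 < d) {A G : Matrix (Fin n × Fin d) (Fin n × Fin d) F} (hA : A.rank = r * d)
    (hG : A * G * A = A) :
    (∃ U : Submodule F (Fin n → F), IsShrunkSubspace B U (n - r)) ∨
    ∃ C : ℕ → Matrix (Fin n × Fin d) (Fin n × Fin d) F, (∀ i, C i ∈ blowUp B d d) ∧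
      ∃ j ≤ r, (1 - A * G) * alternatingProd G (1 - G * A) C j ≠ 0 := by
  rw [or_iff_not_imp_right]
  intro H
  push Not at H
  set kerA := LinearMap.ker A.mulVecLin
  let pre : Submodule F (Fin n → F) → Submodule F (Fin n × Fin d → F) :=
    fun W => kerA ⊔ (sliceLift d W).map G.mulVecLin
  let Ψ : Submodule F (Fin n → F) → Submodule F (Fin n → F) :=
    fun W => imageSpan B (sliceSpan (pre W))
  have hΨ : Monotone Ψ := fun W W' h => imageSpan_mono B (sliceSpan_mono
    (sup_le_sup_left (Submodule.map_mono (sliceLift_mono h)) _))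
  let T : ℕ → Submodule F (Fin n × Fin d → F) := fun i => Submodule.span F
    {w | ∃ C : ℕ → Matrix (Fin n × Fin d) (Fin n × Fin d) F, (∀ i, C i ∈ blowUp B d d) ∧
      ∃ j < i, ∃ u, w = alternatingProd G (1 - G * A) C j *ᵥ u}
  have hT : ∀ i, sliceLift d (Ψ^[i] ⊥) ≤ T i := by
    intro i
    induction i with
    | zero =>
      intro v hv
      have : v = 0 := by
        ext p
        exact congrFun ((Submodule.mem_bot F).1 (hv p.2)) p.1
      rw [this]
      exact zero_mem _
    | succ i ih =>
      rw [Function.iterate_succ_apply']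
      refine (sliceLift_imageSpan_le B _).trans (Submodule.span_le.2 ?_)
      rintro _ ⟨C, hC, v, hv, rfl⟩
      obtain ⟨u, hu, _, ⟨q, hq, rfl⟩, rfl⟩ := Submodule.mem_sup.1 hv
      rw [mulVec_add]
      refine add_mem ?_ ?_
      · refine Submodule.subset_span ⟨fun _ => C, fun _ => hC, 0, by omega, u, ?_⟩
        have hu' : A *ᵥ u = 0 := hu
        simp only [alternatingProd]
        rw [← mulVec_mulVec, sub_mulVec, one_mulVec, ← mulVec_mulVec, hu', mulVec_zero, sub_zero]
      · have hle : T i ≤ (T (i + 1)).comap (C.mulVecLin ∘ₗ G.mulVecLin) := by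
          refine Submodule.span_le.2 ?_
          rintro _ ⟨C', hC', j, hj, u', rfl⟩
          refine Submodule.subset_span ⟨Function.update C' (j + 1) C, ?_, j + 1, by omega, u', ?_⟩
          · intro l
            by_cases hl : l = j + 1
            · subst hl; simpa using hC
            · simpa [hl] using hC' l
          · have hcongr := alternatingProd_congr G (1 - G * A) (C := Function.update C' (j + 1) C)
              (C' := C') (j := j) fun l hl => Function.update_of_ne (by omega) _ _
            rw [alternatingProd, Function.update_self, hcongr]
            simp [mulVec_mulVec, Matrix.mul_assoc]
        exact hle (ih hq)
  have hrange : ∀ i ≤ r + 1, sliceLift d (Ψ^[i] ⊥) ≤ LinearMap.range A.mulVecLin := by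
    intro i hi
    refine (hT i).trans (Submodule.span_le.2 ?_)
    rintro _ ⟨C, hC, j, hj, u, rfl⟩
    have h := H C hC j (by omega)
    rw [Matrix.sub_mul, Matrix.one_mul, sub_eq_zero] at h
    refine ⟨G *ᵥ (alternatingProd G (1 - G * A) C j *ᵥ u), ?_⟩
    rw [mulVecLin_apply, mulVec_mulVec, mulVec_mulVec, ← h]
  have hfin : ∀ i ≤ r + 1, Module.finrank F (Ψ^[i] ⊥ : Submodule F (Fin n → F)) ≤ r := by
    intro i hi
    have h := Submodule.finrank_mono (hrange i hi)
    rw [finrank_sliceLift] at h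
    change _ ≤ A.rank at h
    rw [hA, mul_comm r] at h
    exact Nat.le_of_mul_le_mul_left h hd
  obtain ⟨i, hi, hfix⟩ : ∃ i ≤ r, Ψ^[i] ⊥ = Ψ (Ψ^[i] ⊥) := by
    by_contra! hne
    have hmono := hΨ.monotone_iterate_of_le_map (bot_le : ⊥ ≤ Ψ ⊥)
    have hgrow : ∀ i ≤ r + 1, i ≤ Module.finrank F (Ψ^[i] ⊥ : Submodule F (Fin n → F)) := by
      intro i
      induction i with
      | zero => intro _; exact Nat.zero_le _
      | succ i ih =>
        intro hi
        have hlt : Ψ^[i] ⊥ < Ψ^[i + 1] ⊥ :=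
          lt_of_le_of_ne (hmono (Nat.le_succ i))
            (by rw [Function.iterate_succ_apply']; exact hne i (by omega))
        have := Submodule.finrank_lt_finrank_of_lt hlt
        have := ih (by omega)
        omega
    have h1 := hgrow (r + 1) le_rfl
    have h2 := hfin (r + 1) le_rfl
    omega
  set W := Ψ^[i] ⊥
  have hW : sliceLift d W ≤ LinearMap.range A.mulVecLin := hrange i (by omega)
  have hAG : ∀ q ∈ sliceLift d W, A *ᵥ (G *ᵥ q) = q := by
    intro q hq
    obtain ⟨y, rfl⟩ := hW hq
    rw [mulVecLin_apply, mulVec_mulVec, mulVec_mulVec, hG]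
  refine ⟨sliceSpan (pre W), ?_⟩
  change Module.finrank F (Ψ W) + (n - r) ≤ _
  rw [← hfix]
  have hinf : kerA ⊓ (sliceLift d W).map G.mulVecLin = ⊥ := by
    rw [eq_bot_iff]
    rintro _ ⟨hx, q, hq, rfl⟩
    have h0 : A *ᵥ (G *ᵥ q) = 0 := hx
    rw [hAG q hq] at h0
    rw [h0, map_zero]
    exact zero_mem _
  have hdim := Submodule.finrank_sup_add_finrank_inf_eq kerA ((sliceLift d W).map G.mulVecLin)
  rw [hinf, finrank_bot, add_zero] at hdim
  have hmap : Module.finrank F (sliceLift d W) ≤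
      Module.finrank F ((sliceLift d W).map G.mulVecLin) := by
    refine le_trans (Submodule.finrank_mono ?_)
      (Submodule.finrank_map_le A.mulVecLin ((sliceLift d W).map G.mulVecLin))
    intro q hq
    exact ⟨_, ⟨q, hq, rfl⟩, hAG q hq⟩
  have hker : r * d + Module.finrank F kerA = n * d := by
    have h := LinearMap.finrank_range_add_finrank_ker A.mulVecLin
    rw [← hA]
    exact h.trans (by simp)
  have hU := Submodule.finrank_mono (le_sliceLift_sliceSpan (pre W))
  rw [finrank_sliceLift] at hU hmap
  have hUdim : Module.finrank F kerA + d * Module.finrank F W ≤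
      d * Module.finrank F (sliceSpan (pre W)) := by
    change Module.finrank F (pre W) = _ at hdim
    omega
  have hrn : r ≤ n := by
    apply Nat.le_of_mul_le_mul_right _ hd
    omega
  obtain ⟨t, rfl⟩ := Nat.exists_eq_add_of_le hrn
  rw [Nat.add_sub_cancel_left]
  apply Nat.le_of_mul_le_mul_left _ hd
  have : Module.finrank F kerA = t * d := by
    rw [add_mul] at hker
    omega
  rw [this] at hUdim
  linarith

end Wong

section KroneckerVec

variable {F : Type} [Field F] {m p : Type*} [Fintype m] [Fintype p]

/-- The action of a Kronecker product on a pure tensor. -/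
theorem kronecker_mulVec_mul (A : Matrix m m F) (T : Matrix p p F) (u : m → F) (w : p → F) :
    (A ⊗ₖ T) *ᵥ (fun x => u x.1 * w x.2) = fun x => (A *ᵥ u) x.1 * (T *ᵥ w) x.2 := by
  ext x
  simp only [mulVec, dotProduct, kroneckerMap_apply, Fintype.sum_prod_type, Finset.sum_mul_sum]
  exact Finset.sum_congr rfl fun i _ => Finset.sum_congr rfl fun j _ => by ring

/-- The matrix applying `C q` on slice `q` and then shifting the slices cyclically. -/
def shiftSum {e : ℕ} (C : ℕ → Matrix m m F) :
    Matrix (m × Fin (e + 1)) (m × Fin (e + 1)) F :=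
  ∑ q : Fin (e + 1), C q ⊗ₖ Matrix.single (q + 1) q 1

theorem shiftSum_mulVec {e : ℕ} (C : ℕ → Matrix m m F) (q : Fin (e + 1)) (u : m → F) :
    shiftSum C *ᵥ (fun x => u x.1 * (Pi.single q 1 : Fin (e + 1) → F) x.2) =
      fun x => (C q *ᵥ u) x.1 * (Pi.single (q + 1) 1 : Fin (e + 1) → F) x.2 := by
  rw [shiftSum, Matrix.sum_mulVec, Finset.sum_eq_single q]
  · rw [kronecker_mulVec_mul]
    ext x
    simp [Matrix.single_apply, Pi.single_apply, eq_comm]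
  · intro b _ hb
    rw [kronecker_mulVec_mul]
    ext x
    simp [hb]
  · simp

variable [DecidableEq m]

theorem one_sub_kronecker_one_mul [DecidableEq p] (X Y : Matrix m m F) :
    1 - (X ⊗ₖ (1 : Matrix p p F)) * (Y ⊗ₖ 1) = (1 - X * Y) ⊗ₖ 1 := by
  rw [← mul_kronecker_mul, Matrix.one_mul, sub_eq_iff_eq_add, ← add_kronecker, sub_add_cancel,
    one_kronecker_one]

theorem shiftSum_alternating_mulVec {e : ℕ} (A G : Matrix m m F)
    (C : ℕ → Matrix m m F) (u : m → F) {j : ℕ} (hj : j < e + 1) :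
    (shiftSum C * ((G ⊗ₖ (1 : Matrix (Fin (e + 1)) (Fin (e + 1)) F)) * shiftSum C) ^ j *
        (1 - (G ⊗ₖ 1) * (A ⊗ₖ 1))) *ᵥ (fun x => u x.1 * (Pi.single 0 1 : Fin (e + 1) → F) x.2) =
      fun x => (alternatingProd G (1 - G * A) C j *ᵥ u) x.1 *
        (Pi.single (⟨j, hj⟩ + 1) 1 : Fin (e + 1) → F) x.2 := by
  induction j with
  | zero =>
    rw [pow_zero, Matrix.mul_one, one_sub_kronecker_one_mul, ← mulVec_mulVec,
      kronecker_mulVec_mul, one_mulVec, shiftSum_mulVec, mulVec_mulVec]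
    rfl
  | succ j ih =>
    have hsucc : (⟨j, by omega⟩ : Fin (e + 1)) + 1 = ⟨j + 1, hj⟩ := by
      ext
      rw [Fin.val_add_one_of_lt (by simpa [Fin.lt_def] using hj)]
    have ih := ih (by omega)
    rw [pow_succ', Matrix.mul_assoc, Matrix.mul_assoc, Matrix.mul_assoc, ← mulVec_mulVec,
      ← mulVec_mulVec, ← Matrix.mul_assoc, ih, kronecker_mulVec_mul, one_mulVec, hsucc,
      shiftSum_mulVec, mulVec_mulVec, mulVec_mulVec, alternatingProd, Matrix.mul_assoc]

theorem shiftSum_alternating_ne_zero {e : ℕ} {A G : Matrix m m F}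
    {C : ℕ → Matrix m m F} {j : ℕ} (hj : j < e + 1)
    (h : (1 - A * G) * alternatingProd G (1 - G * A) C j ≠ 0) :
    (1 - (A ⊗ₖ (1 : Matrix (Fin (e + 1)) (Fin (e + 1)) F)) * (G ⊗ₖ 1)) * shiftSum C *
      ((G ⊗ₖ 1) * shiftSum C) ^ j * (1 - (G ⊗ₖ 1) * (A ⊗ₖ 1)) ≠ 0 := by
  contrapose! h
  refine Matrix.toLin'.injective (LinearMap.ext fun u => funext fun a => ?_)
  have hu := congrArg
    (fun N => N *ᵥ (fun x => u x.1 * (Pi.single 0 1 : Fin (e + 1) → F) x.2)) h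
  rw [one_sub_kronecker_one_mul A G] at hu
  simp only [Matrix.mul_assoc] at hu
  rw [← mulVec_mulVec] at hu
  simp only [← Matrix.mul_assoc] at hu
  rw [shiftSum_alternating_mulVec A G C u hj, kronecker_mulVec_mul, one_mulVec, zero_mulVec,
    mulVec_mulVec] at hu
  rw [Matrix.toLin'_apply, map_zero, LinearMap.zero_apply, Pi.zero_apply]
  simpa only [Pi.single_eq_same, mul_one, Pi.zero_apply] using congrFun hu (a, ⟨j, hj⟩ + 1)

end KroneckerVec

theorem reindex_kronecker_mem_blowUp {F : Type} [Field F] {n d d' : ℕ}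
    {B : Submodule F (Matrix (Fin n) (Fin n) F)} {C : Matrix (Fin n × Fin d) (Fin n × Fin d) F}
    (hC : C ∈ blowUp B d d) (S : Matrix (Fin d') (Fin d') F) :
    (C ⊗ₖ S).reindex
        ((Equiv.prodAssoc _ _ _).trans ((Equiv.refl _).prodCongr finProdFinEquiv))
        ((Equiv.prodAssoc _ _ _).trans ((Equiv.refl _).prodCongr finProdFinEquiv)) ∈
      blowUp B (d * d') (d * d') := by
  induction hC using Submodule.span_induction with
  | mem C hC =>
    obtain ⟨A, hA, T, rfl⟩ := hC
    refine Submodule.subset_span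
      ⟨A, hA, (T ⊗ₖ S).reindex finProdFinEquiv finProdFinEquiv, ?_⟩
    ext x y
    simp [mul_assoc]
  | zero => simp
  | add C C' _ _ h h' =>
    rw [add_kronecker]
    exact add_mem h h'
  | smul t C _ h =>
    rw [smul_kronecker]
    exact Submodule.smul_mem _ t h

/-- If the second Wong sequence of `A` leaves the image of `A`, then a further blow-up contains a
matrix of larger normalized rank. -/
theorem exists_mem_blowUp_lt_rank {F : Type} [Field F] {n d e r : ℕ}
    {B : Submodule F (Matrix (Fin n) (Fin n) F)} {A G : Matrix (Fin n × Fin d) (Fin n × Fin d) F}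
    (hAB : A ∈ blowUp B d d) (hA : A.rank = r * d) (hG : A * G * A = A)
    (hF : ((r * (d * (e + 1)) + 1 : ℕ) : Cardinal) < Cardinal.mk F)
    {C : ℕ → Matrix (Fin n × Fin d) (Fin n × Fin d) F} (hC : ∀ i, C i ∈ blowUp B d d)
    {j : ℕ} (hj : j < e + 1) (h : (1 - A * G) * alternatingProd G (1 - G * A) C j ≠ 0) :
    ∃ M ∈ blowUp B (d * (e + 1)) (d * (e + 1)), r * (d * (e + 1)) < M.rank := by
  have hrank : (A ⊗ₖ (1 : Matrix (Fin (e + 1)) (Fin (e + 1)) F)).rank = r * (d * (e + 1)) := by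
    rw [rank_kronecker_one, hA, Fintype.card_fin, mul_assoc]
  have hG' : (A ⊗ₖ (1 : Matrix (Fin (e + 1)) (Fin (e + 1)) F)) * (G ⊗ₖ 1) * (A ⊗ₖ 1) =
      A ⊗ₖ 1 := by
    rw [← mul_kronecker_mul, ← mul_kronecker_mul, hG, Matrix.one_mul, Matrix.one_mul]
  obtain ⟨f, hf⟩ := exists_rank_lt_rank_add_smul hG' (by rwa [hrank])
    (shiftSum_alternating_ne_zero hj h)
  rw [hrank] at hf
  refine ⟨_, ?_, hf.trans_eq (rank_reindex
    ((Equiv.prodAssoc _ _ _).trans ((Equiv.refl _).prodCongr finProdFinEquiv))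
    ((Equiv.prodAssoc _ _ _).trans ((Equiv.refl _).prodCongr finProdFinEquiv)) _).symm⟩
  rw [← coe_reindexLinearEquiv F F, map_add, map_smul, shiftSum, map_sum]
  exact add_mem (reindex_kronecker_mem_blowUp hAB 1) (Submodule.smul_mem _ _
    (Submodule.sum_mem _ fun q _ => reindex_kronecker_mem_blowUp (hC q) _))

/-- Blow-up rank increment dichotomy: for all positive `n, d, d′` there is `N` such that
over any field `F` with `|F| ≥ N`, if `r < d′` and the `(d,d)`-blow-up of `B ≤ M(n,F)`
contains a matrix of rank `r·d`, then either `B` has an `(n − r)`-shrunk subspace, or the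
`(dd′,dd′)`-blow-up contains a matrix of rank at least `(r+1)·d·d′`. -/
theorem stmt11 (n d d' : ℕ) (hn : 0 < n) (hd : 0 < d) (hd' : 0 < d') :
    ∃ N : ℕ, ∀ (F : Type) (_ : Field F),
      (N : Cardinal) ≤ Cardinal.mk F →
      ∀ (B : Submodule F (Matrix (Fin n) (Fin n) F)) (r : ℕ), r < d' →
        (∃ A ∈ blowUp B d d, A.rank = r * d) →
        (∃ U : Submodule F (Fin n → F), IsShrunkSubspace B U (n - r)) ∨
        (∃ M ∈ blowUp B (d * d') (d * d'), (r + 1) * (d * d') ≤ M.rank) := by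
  refine ⟨n * (d * d') + 2, fun F _ hF B r hr ⟨A, hAB, hA⟩ => ?_⟩
  obtain ⟨e, rfl⟩ := Nat.exists_eq_add_of_lt hd'
  rw [zero_add] at *
  have hrn : r ≤ n := by
    have := A.rank_le_card_width
    rw [hA, Fintype.card_prod, Fintype.card_fin, Fintype.card_fin] at this
    exact Nat.le_of_mul_le_mul_right this hd
  obtain ⟨G, hG⟩ := exists_generalized_inverse A
  refine (exists_shrunk_or_alternatingProd_ne_zero B hd hA hG).imp_right ?_
  rintro ⟨C, hC, j, hj, h⟩
  have hrank : r * (d * (e + 1)) ≤ n * (d * (e + 1)) := Nat.mul_le_mul_right _ hrn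
  obtain ⟨M, hM, hlt⟩ := exists_mem_blowUp_lt_rank hAB hA hG
    (lt_of_lt_of_le (Nat.cast_lt.2 (by omega)) hF) hC (hj.trans_lt hr) h
  exact exists_mem_blowUp_succ_mul_le_rank B (by positivity)
    (lt_of_lt_of_le (Nat.cast_lt.2 (by omega)) hF) hM hlt
end

section
/- Let N > n > 0 be integers and let r : {0, 1, …, N}² → ℤ be a function satisfying: 0 ≤ r(k,ℓ) ≤ min(k,ℓ)·n for all k, ℓ; r(k,0) = r(0,ℓ) = 0; (1) r(k,ℓ+1) ≥ r(k,ℓ) for 0 ≤ ℓ < N; (2) r(k+1,ℓ) ≥ r(k,ℓ) for 0 ≤ k < N; (3) 2·r(k,ℓ+1) ≥ r(k,ℓ) + r(k,ℓ+2) for 0 ≤ ℓ < N−1; (4) 2·r(k+1,ℓ) ≥ r(k,ℓ) + r(k+2,ℓ) for 0 ≤ k < N−1; (5) k divides r(k,k) for every k. Suppose moreover that r(1,1) > 1 and that there exists an integer d with n ≤ d + 1 ≤ N and r(d+1, d+1) = n(d+1). Then r(d,d) = nd. -/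
/-- For a concave integer sequence, the last increment is at most the average of the previous
ones. -/
lemma add_mul_increment_le_of_concave (f : ℕ → ℤ) (M : ℕ)
    (hf : ∀ i, i + 1 < M → f i + f (i + 2) ≤ 2 * f (i + 1)) (b : ℕ) (hb : b + 1 ≤ M) :
    f 0 + b * (f (b + 1) - f b) ≤ f b := by
  induction b with
  | zero => simp
  | succ b ih =>
    have hprev := ih (by omega)
    have hconc := hf b (by omega)
    have hb0 : (0 : ℤ) ≤ b := by positivity
    push_cast
    nlinarith

/-- A concave integer sequence vanishing at `0` is bounded by the line through its value at
`1`. -/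
lemma le_mul_apply_one_of_concave (f : ℕ → ℤ) (M : ℕ) (h0 : f 0 = 0)
    (hf : ∀ i, i + 1 < M → f i + f (i + 2) ≤ 2 * f (i + 1)) (b : ℕ) (hb : b ≤ M) :
    f b ≤ b * f 1 := by
  induction b with
  | zero => simp [h0]
  | succ b ih =>
    rcases Nat.eq_zero_or_pos b with rfl | hpos
    · simp
    have hprev := ih (by omega)
    have hincr := add_mul_increment_le_of_concave f M hf b hb
    have hb0 : (0 : ℤ) < b := by exact_mod_cast hpos
    push_cast
    refine le_of_mul_le_mul_left ?_ hb0
    nlinarith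

/-- Let `N > n > 0` and `r : {0,…,N}² → ℤ` satisfy the boundary, monotonicity,
concavity and divisibility conditions (1)–(5). If `r(1,1) > 1` and `r(d+1,d+1) = n(d+1)`
for some `d` with `n ≤ d+1 ≤ N`, then `r(d,d) = n·d`. -/
theorem stmt14 (N n : ℕ) (hn : 0 < n) (hN : n < N)
    (r : ℕ → ℕ → ℤ)
    (hbound : ∀ k ℓ, k ≤ N → ℓ ≤ N → 0 ≤ r k ℓ ∧ r k ℓ ≤ (min k ℓ : ℤ) * n)
    (hzero : ∀ k, k ≤ N → r k 0 = 0 ∧ r 0 k = 0)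
    (h1 : ∀ k ℓ, k ≤ N → ℓ < N → r k ℓ ≤ r k (ℓ + 1))
    (h2 : ∀ k ℓ, k < N → ℓ ≤ N → r k ℓ ≤ r (k + 1) ℓ)
    (h3 : ∀ k ℓ, k ≤ N → ℓ + 1 < N → r k ℓ + r k (ℓ + 2) ≤ 2 * r k (ℓ + 1))
    (h4 : ∀ k ℓ, k + 1 < N → ℓ ≤ N → r k ℓ + r (k + 2) ℓ ≤ 2 * r (k + 1) ℓ)
    (h5 : ∀ k, k ≤ N → (k : ℤ) ∣ r k k)
    (h11 : 1 < r 1 1)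
    (d : ℕ) (hd1 : n ≤ d + 1) (hd2 : d + 1 ≤ N)
    (hfull : r (d + 1) (d + 1) = (n : ℤ) * (d + 1)) :
    r d d = (n : ℤ) * d := by
  rcases Nat.eq_zero_or_pos d with rfl | hd
  · simpa using (hzero 0 (Nat.zero_le N)).1
  have hd0 : (0 : ℤ) < d := by exact_mod_cast hd
  have hnd : (n : ℤ) ≤ d + 1 := by exact_mod_cast hd1
  -- Concavity along column `d + 1` forces the maximal value at row `d`.
  have hcol : (n : ℤ) * d ≤ r d (d + 1) := by
    have h := add_mul_increment_le_of_concave (fun k => r k (d + 1)) N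
      (fun k hk => h4 k (d + 1) hk hd2) d hd2
    simp only [(hzero (d + 1) hd2).2, hfull] at h
    refine le_of_mul_le_mul_left ?_ (by linarith : (0 : ℤ) < d + 1)
    linarith
  have hrow := add_mul_increment_le_of_concave (fun l => r d l) N
    (fun l hl => h3 d l (by omega) hl) d hd2
  simp only [(hzero d (by omega)).1] at hrow
  have hdiag_le : r d d ≤ (n : ℤ) * d := by
    have h := (hbound d d (by omega) (by omega)).2
    rw [min_self] at h
    linarith
  obtain ⟨m, hm⟩ := h5 d (by omega)
  rcases hdiag_le.lt_or_eq with hlt | heq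
  swap
  · exact heq
  exfalso
  have hmn : m + 1 ≤ n := by
    have : (d : ℤ) * m < d * n := by linarith
    exact lt_of_mul_lt_mul_left this hd0.le
  have hm_ge : (n : ℤ) * d ≤ (d + 1) * m := by
    refine le_of_mul_le_mul_left ?_ hd0
    nlinarith
  have hn_eq : (n : ℤ) = d + 1 := by nlinarith
  have hm_eq : m = d := by
    have hle : m ≤ d := by linarith
    have hge : (d : ℤ) ≤ m := by
      refine le_of_mul_le_mul_left ?_ (by linarith : (0 : ℤ) < d + 1)
      rw [hn_eq] at hm_ge
      exact hm_ge
    exact le_antisymm hle hge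
  obtain ⟨e, rfl⟩ : ∃ e, d = e + 1 := ⟨d - 1, by omega⟩
  -- Row `d` has last increment `d`, which forces `r d 1 ≤ d`.
  have hrow_one : r (e + 1) 1 ≤ e + 1 := by
    have h := add_mul_increment_le_of_concave (fun l => r (e + 1) (l + 1)) (N - 1)
      (fun l hl => h3 (e + 1) (l + 1) (by omega) (by omega)) e (by omega)
    simp only [zero_add] at h
    push_cast at *
    subst hm_eq
    rw [hn_eq] at hcol
    have he : (0 : ℤ) ≤ e := by positivity
    nlinarith
  have hlast_one : (n : ℤ) ≤ r (e + 1 + 1) 1 := by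
    have h := le_mul_apply_one_of_concave (fun l => r (e + 1 + 1) l) N (hzero _ hd2).1
      (fun l hl => h3 _ l hd2 hl) (e + 1 + 1) hd2
    simp only [hfull] at h
    push_cast at h
    refine le_of_mul_le_mul_left ?_ (by positivity : (0 : ℤ) < e + 1 + 1)
    linarith
  -- Column `1` has last increment at least `1`, which forces `r 1 1 ≤ 1`.
  have h := add_mul_increment_le_of_concave (fun k => r (k + 1) 1) (N - 1)
    (fun k hk => h4 (k + 1) 1 (by omega) (by omega)) e (by omega)
  simp only [zero_add] at h
  push_cast at hn_eq
  have he : (0 : ℤ) ≤ e := by positivity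
  nlinarith
end

section
/- Let N > n > 0 be integers and let r : {0, 1, …, N}² → ℤ be a function satisfying: 0 ≤ r(k,ℓ) ≤ min(k,ℓ)·n for all k, ℓ; r(k,0) = r(0,ℓ) = 0; (1) r(k,ℓ+1) ≥ r(k,ℓ) for 0 ≤ ℓ < N; (2) r(k+1,ℓ) ≥ r(k,ℓ) for 0 ≤ k < N; (3) 2·r(k,ℓ+1) ≥ r(k,ℓ) + r(k,ℓ+2) for 0 ≤ ℓ < N−1; (4) 2·r(k+1,ℓ) ≥ r(k,ℓ) + r(k+2,ℓ) for 0 ≤ k < N−1; (5) k divides r(k,k) for every k. Suppose moreover that there exists an integer d with n ≤ d + 1 ≤ N and r(d+1, d+1) = n(d+1). Then for every integer a with 1 ≤ a ≤ d + 1 one has r(d+1, a) = a·n and r(a, d+1) = a·n. -/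
/-- A concave sequence on `{0,…,M}` that starts at `0`, lies below the line of slope `c`
and meets it at `M` coincides with that line. -/
theorem eq_mul_of_concave_of_le {M : ℕ} {c : ℤ} {f : ℕ → ℤ} (h0 : f 0 = 0)
    (hle : ∀ a ≤ M, f a ≤ a * c)
    (hconc : ∀ a, a + 2 ≤ M → f a + f (a + 2) ≤ 2 * f (a + 1))
    (hM : f M = M * c) {a : ℕ} (ha : a ≤ M) : f a = a * c := by
  have hstep : ∀ b, b + 1 ≤ M → f (b + 1) ≤ f b + c := by
    intro b
    induction b with
    | zero =>
      intro hb
      simpa [h0] using hle 1 hb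
    | succ b ih =>
      intro hb
      linarith [ih (by omega), hconc b hb]
  have hge : ∀ b, a ≤ b → b ≤ M → f b ≤ f a + (b - a) * c := by
    intro b hab
    induction b, hab using Nat.le_induction with
    | base => simp
    | succ b _ ih =>
      intro hb
      push_cast
      linarith [ih (by omega), hstep b hb]
  linarith [hge M ha le_rfl, hle a ha]

/-- Let `N > n > 0` and `r : {0,…,N}² → ℤ` satisfy the boundary, monotonicity,
concavity and divisibility conditions (1)–(5). If `r(d+1,d+1) = n(d+1)`
for some `d` with `n ≤ d+1 ≤ N`, then `r(d+1,a) = a·n = r(a,d+1)` for all `1 ≤ a ≤ d+1`. -/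
theorem stmt15 (N n : ℕ) (hn : 0 < n) (hN : n < N)
    (r : ℕ → ℕ → ℤ)
    (hbound : ∀ k ℓ, k ≤ N → ℓ ≤ N → 0 ≤ r k ℓ ∧ r k ℓ ≤ (min k ℓ : ℤ) * n)
    (hzero : ∀ k, k ≤ N → r k 0 = 0 ∧ r 0 k = 0)
    (h1 : ∀ k ℓ, k ≤ N → ℓ < N → r k ℓ ≤ r k (ℓ + 1))
    (h2 : ∀ k ℓ, k < N → ℓ ≤ N → r k ℓ ≤ r (k + 1) ℓ)
    (h3 : ∀ k ℓ, k ≤ N → ℓ + 1 < N → r k ℓ + r k (ℓ + 2) ≤ 2 * r k (ℓ + 1))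
    (h4 : ∀ k ℓ, k + 1 < N → ℓ ≤ N → r k ℓ + r (k + 2) ℓ ≤ 2 * r (k + 1) ℓ)
    (h5 : ∀ k, k ≤ N → (k : ℤ) ∣ r k k)
    (d : ℕ) (hd1 : n ≤ d + 1) (hd2 : d + 1 ≤ N)
    (hfull : r (d + 1) (d + 1) = (n : ℤ) * (d + 1)) :
    ∀ a : ℕ, 1 ≤ a → a ≤ d + 1 →
      r (d + 1) a = (a : ℤ) * n ∧ r a (d + 1) = (a : ℤ) * n := by
  intro a _ ha
  constructor
  · refine eq_mul_of_concave_of_le (M := d + 1) (f := fun b => r (d + 1) b)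
      (hzero _ hd2).1 (fun b hb => ?_) (fun b hb => h3 _ b hd2 (by omega)) ?_ ha
    · exact (hbound _ b hd2 (hb.trans hd2)).2.trans
        (mul_le_mul_of_nonneg_right (min_le_right _ _) (by positivity))
    · push_cast
      linarith
  · refine eq_mul_of_concave_of_le (M := d + 1) (f := fun b => r b (d + 1))
      (hzero _ hd2).2 (fun b hb => ?_) (fun b hb => h4 b _ (by omega) hd2) ?_ ha
    · exact (hbound b _ (hb.trans hd2) hd2).2.trans
        (mul_le_mul_of_nonneg_right (min_le_left _ _) (by positivity))
    · push_cast
      linarith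
end

section
/- Let N > n > 0 be integers and let r : {0, 1, …, N}² → ℤ be a function satisfying: 0 ≤ r(k,ℓ) ≤ min(k,ℓ)·n for all k, ℓ; r(k,0) = r(0,ℓ) = 0; (1) r(k,ℓ+1) ≥ r(k,ℓ) for 0 ≤ ℓ < N; (2) r(k+1,ℓ) ≥ r(k,ℓ) for 0 ≤ k < N; (3) 2·r(k,ℓ+1) ≥ r(k,ℓ) + r(k,ℓ+2) for 0 ≤ ℓ < N−1; (4) 2·r(k+1,ℓ) ≥ r(k,ℓ) + r(k+2,ℓ) for 0 ≤ k < N−1; (5) k divides r(k,k) for every k. Suppose moreover that r(1,1) > 1 and that there exists an integer d with n ≤ d + 1 ≤ N and r(d+1, d+1) = n(d+1). Then r(1, d) = n. -/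
/-- A sequence that vanishes at `0` and is concave on `{0, …, M}` grows at most linearly there. -/
lemma le_mul_of_concave (f : ℕ → ℤ) (M : ℕ) (h0 : f 0 = 0)
    (hf : ∀ k, k + 1 < M → f k + f (k + 2) ≤ 2 * f (k + 1)) (m : ℕ) (hm : m ≤ M) :
    f m ≤ m * f 1 := by
  have hstep : ∀ k, k < M → f (k + 1) - f k ≤ f 1 := by
    intro k
    induction k with
    | zero => simp [h0]
    | succ k ih =>
      intro hk
      have := hf k hk
      have := ih (by omega)
      rw [show k + 1 + 1 = k + 2 from rfl]
      linarith
  induction m with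
  | zero => simp [h0]
  | succ m ih =>
    have := ih (by omega)
    have := hstep m (by omega)
    push_cast
    linarith

/-- A nondecreasing concave integer sequence with `f 1 > 1` either has already become
stationary at `m`, or has grown by at least one at every step so far. -/
lemma add_two_le_or_eq_of_concave (f : ℕ → ℤ) (M : ℕ) (h1 : 1 < f 1)
    (hmono : ∀ k, k < M → f k ≤ f (k + 1))
    (hf : ∀ k, k + 1 < M → f k + f (k + 2) ≤ 2 * f (k + 1)) (m : ℕ) (hm : m < M) :
    (m : ℤ) + 2 ≤ f (m + 1) ∨ f (m + 1) = f m := by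
  induction m with
  | zero => left; norm_num; omega
  | succ m ih =>
    have h := hf m hm
    have h' := hmono (m + 1) hm
    rw [show m + 1 + 1 = m + 2 from rfl] at h' ⊢
    push_cast
    rcases ih (by omega) with ih | ih <;> omega

/-- Let `N > n > 0` and `r : {0,…,N}² → ℤ` satisfy the boundary, monotonicity,
concavity and divisibility conditions (1)–(5). If `r(1,1) > 1` and `r(d+1,d+1) = n(d+1)`
for some `d` with `n ≤ d+1 ≤ N`, then `r(1,d) = n`. -/
theorem stmt16 (N n : ℕ) (hn : 0 < n) (hN : n < N)
    (r : ℕ → ℕ → ℤ)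
    (hbound : ∀ k ℓ, k ≤ N → ℓ ≤ N → 0 ≤ r k ℓ ∧ r k ℓ ≤ (min k ℓ : ℤ) * n)
    (hzero : ∀ k, k ≤ N → r k 0 = 0 ∧ r 0 k = 0)
    (h1 : ∀ k ℓ, k ≤ N → ℓ < N → r k ℓ ≤ r k (ℓ + 1))
    (h2 : ∀ k ℓ, k < N → ℓ ≤ N → r k ℓ ≤ r (k + 1) ℓ)
    (h3 : ∀ k ℓ, k ≤ N → ℓ + 1 < N → r k ℓ + r k (ℓ + 2) ≤ 2 * r k (ℓ + 1))
    (h4 : ∀ k ℓ, k + 1 < N → ℓ ≤ N → r k ℓ + r (k + 2) ℓ ≤ 2 * r (k + 1) ℓ)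
    (h5 : ∀ k, k ≤ N → (k : ℤ) ∣ r k k)
    (h11 : 1 < r 1 1)
    (d : ℕ) (hd1 : n ≤ d + 1) (hd2 : d + 1 ≤ N)
    (hfull : r (d + 1) (d + 1) = (n : ℤ) * (d + 1)) :
    r 1 d = (n : ℤ) := by
  have hcol : r 1 (d + 1) = n := by
    have hlin := le_mul_of_concave (fun k => r k (d + 1)) N (hzero (d + 1) hd2).2
      (fun k hk => h4 k (d + 1) hk hd2) (d + 1) hd2
    have hle := (hbound 1 (d + 1) (by omega) hd2).2
    have hmin : min ((1 : ℕ) : ℤ) ((d + 1 : ℕ) : ℤ) = 1 := by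
      push_cast; exact min_eq_left (by omega)
    rw [hmin, one_mul] at hle
    simp only [hfull] at hlin
    push_cast at hlin
    refine le_antisymm hle ?_
    have hpos : (0 : ℤ) < (d : ℤ) + 1 := by positivity
    exact le_of_mul_le_mul_left (by linarith) hpos
  rcases add_two_le_or_eq_of_concave (r 1) N h11 (fun k hk => h1 1 k (by omega) hk)
    (fun k hk => h3 1 k (by omega) hk) d hd2 with h | h <;> omega
end

section
/- (Concavity of maximal blow-up ranks.) Let F be a field, B ≤ M(n,F) a matrix space, and k, ℓ positive integers. For positive integers a, b let ρ(a,b) denote the maximal rank of a matrix in the (a,b)-blow-up B^{(a,b)}. If |F| > 2n(k+2), then 2·ρ(k+1, ℓ) ≥ ρ(k, ℓ) + ρ(k+2, ℓ). -/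
open Matrix Kronecker

/-- Reindexing the block rows of a matrix in a blow-up gives a matrix in a blow-up. -/
theorem submatrix_mem_blowUp {F : Type} [Field F] {n : ℕ}
    {B : Submodule F (Matrix (Fin n) (Fin n) F)} {k k' ℓ : ℕ} (f : Fin k' → Fin k)
    {M : Matrix (Fin n × Fin k) (Fin n × Fin ℓ) F} (hM : M ∈ blowUp B k ℓ) :
    M.submatrix (Prod.map id f) id ∈ blowUp B k' ℓ := by
  induction hM using Submodule.span_induction with
  | mem M h =>
    obtain ⟨A, hA, T, rfl⟩ := h
    exact Submodule.subset_span ⟨A, hA, T.submatrix f id, rfl⟩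
  | zero => exact Submodule.zero_mem _
  | add M N _ _ hM hN => exact Submodule.add_mem _ hM hN
  | smul c M _ hM => exact Submodule.smul_mem _ c hM

/-- A matrix of rank `r` can be compressed to the identity matrix of size `r`. -/
theorem Matrix.exists_mul_mul_eq_one {F m p : Type*} [Field F] [Fintype m] [Fintype p]
    (M : Matrix m p F) :
    ∃ (P : Matrix (Fin M.rank) m F) (Q : Matrix p (Fin M.rank) F), P * M * Q = 1 := by
  classical
  let e : LinearMap.range M.mulVecLin ≃ₗ[F] (Fin M.rank → F) :=
    LinearEquiv.ofFinrankEq _ _ (Module.finrank_fin_fun F).symm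
  obtain ⟨s, hs⟩ := (e.toLinearMap ∘ₗ M.mulVecLin.rangeRestrict).exists_rightInverse_of_surjective
    (LinearMap.range_eq_top.2 (e.surjective.comp M.mulVecLin.surjective_rangeRestrict))
  obtain ⟨q, hq⟩ := (LinearMap.range M.mulVecLin).subtype.exists_leftInverse_of_injective
    (Submodule.ker_subtype _)
  refine ⟨LinearMap.toMatrix' (e.toLinearMap ∘ₗ q), LinearMap.toMatrix' s, ?_⟩
  have hM : M = LinearMap.toMatrix' M.mulVecLin := (LinearMap.toMatrix'_toLin' M).symm
  have key : ((e.toLinearMap ∘ₗ q) ∘ₗ M.mulVecLin) ∘ₗ s = LinearMap.id := by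
    rw [← hs]
    ext1 i
    ext1
    have := LinearMap.congr_fun hq (M.mulVecLin.rangeRestrict (s (Pi.single i 1)))
    exact congrArg e this
  conv_lhs => enter [1, 2]; rw [hM]
  rw [← LinearMap.toMatrix'_comp, ← LinearMap.toMatrix'_comp, key, LinearMap.toMatrix'_id]

/-- A nonzero polynomial of degree at most `r` controls where `t • A + B` has rank at least `r`,
provided the compression of `A` or that of `B` to size `r` is the identity. -/
theorem Matrix.exists_polynomial_le_rank_of_mul_mul_eq_one {F m p : Type*} [Field F] [Fintype m]
    [Fintype p] {r : ℕ} (A B : Matrix m p F) (P : Matrix (Fin r) m F) (Q : Matrix p (Fin r) F)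
    (h : P * A * Q = 1 ∨ P * B * Q = 1) :
    ∃ f : Polynomial F, f ≠ 0 ∧ f.natDegree ≤ r ∧
      ∀ t, f.eval t ≠ 0 → r ≤ (t • A + B).rank := by
  refine ⟨det ((Polynomial.X : Polynomial F) • (P * A * Q).map Polynomial.C +
    (P * B * Q).map Polynomial.C), ?_, ?_, ?_⟩
  · intro h0
    rcases h with h | h
    · have := Polynomial.coeff_det_X_add_C_card (P * A * Q) (P * B * Q)
      rw [h0, h] at this
      simp at this
    · have := Polynomial.coeff_det_X_add_C_zero (P * A * Q) (P * B * Q)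
      rw [h0, h] at this
      simp at this
  · simpa using Polynomial.natDegree_det_X_add_C_le (P * A * Q) (P * B * Q)
  · intro t ht
    have heq : (Polynomial.evalRingHom t).mapMatrix
        ((Polynomial.X : Polynomial F) • (P * A * Q).map Polynomial.C +
          (P * B * Q).map Polynomial.C) = P * (t • A + B) * Q := by
      rw [Matrix.mul_add, Matrix.add_mul, Matrix.mul_smul, Matrix.smul_mul]
      ext i j
      simp [-Matrix.map_mul, mul_comm t]
    rw [← Polynomial.coe_evalRingHom, RingHom.map_det, heq] at ht
    calc r = (P * (t • A + B) * Q).rank := by simp [Matrix.rank_of_det_ne_zero ht]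
      _ ≤ (P * (t • A + B)).rank := Matrix.rank_mul_le_left _ _
      _ ≤ (t • A + B).rank := Matrix.rank_mul_le_right _ _

theorem Matrix.rank_submatrix_eq_finrank_span_image {F m m₀ p : Type*} [Field F] [Finite m₀]
    [Fintype p] (M : Matrix m p F) (f : m₀ → m) :
    (M.submatrix f id).rank =
      Module.finrank F (Submodule.span F (M.row '' Set.range f)) := by
  rw [Matrix.rank_eq_finrank_span_row, ← Set.range_comp]
  rfl

/-- Submodularity of the rank in the set of rows. -/
theorem Matrix.rank_submodular {F m m₀ m₁ m₂ p : Type*} [Field F] [Finite m] [Finite m₀]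
    [Finite m₁] [Finite m₂] [Fintype p] (M : Matrix m p F) (f : m₁ → m) (g : m₂ → m) (h : m₀ → m)
    (hfg : Set.range f ∪ Set.range g = Set.univ) (hf : Set.range h ⊆ Set.range f)
    (hg : Set.range h ⊆ Set.range g) :
    (M.submatrix h id).rank + M.rank ≤ (M.submatrix f id).rank + (M.submatrix g id).rank := by
  rw [M.rank_submatrix_eq_finrank_span_image, M.rank_submatrix_eq_finrank_span_image,
    M.rank_submatrix_eq_finrank_span_image, Matrix.rank_eq_finrank_span_row,
    ← Submodule.finrank_sup_add_finrank_inf_eq (Submodule.span F (M.row '' Set.range f)),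
    ← Submodule.span_union, ← Set.image_union, hfg, Set.image_univ, add_comm]
  gcongr
  exact Submodule.finrank_mono (le_inf (Submodule.span_mono (Set.image_mono hf))
    (Submodule.span_mono (Set.image_mono hg)))

/-- Concavity of maximal blow-up ranks: if `ρ(a,b)` denotes the maximal rank of a matrix
in the `(a,b)`-blow-up of `B ≤ M(n,F)` and `|F| > 2n(k+2)`, then
`2·ρ(k+1,ℓ) ≥ ρ(k,ℓ) + ρ(k+2,ℓ)`. -/
theorem stmt17 {F : Type} [Field F] {n : ℕ}
    (B : Submodule F (Matrix (Fin n) (Fin n) F))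
    (k ℓ : ℕ) (hk : 0 < k) (hℓ : 0 < ℓ)
    (hF : (2 * n * (k + 2) : Cardinal) < Cardinal.mk F)
    (ρk ρk1 ρk2 : ℕ)
    (hρk : IsGreatest {t : ℕ | ∃ A ∈ blowUp B k ℓ, t = A.rank} ρk)
    (hρk1 : IsGreatest {t : ℕ | ∃ A ∈ blowUp B (k + 1) ℓ, t = A.rank} ρk1)
    (hρk2 : IsGreatest {t : ℕ | ∃ A ∈ blowUp B (k + 2) ℓ, t = A.rank} ρk2) :
    ρk + ρk2 ≤ 2 * ρk1 := by
  obtain ⟨N, hN, rfl⟩ := hρk.1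
  obtain ⟨M, hM, rfl⟩ := hρk2.1
  let retract : Fin (k + 2) → Fin k := fun i => if h : i.1 < k then ⟨i, h⟩ else ⟨0, hk⟩
  let incl : Fin k → Fin (k + 2) := Fin.castAdd 2
  let N' := N.submatrix (Prod.map id retract) id
  have hN' : N' ∈ blowUp B (k + 2) ℓ := submatrix_mem_blowUp retract hN
  have hincl : N'.submatrix (Prod.map id incl) id = N := by
    ext ⟨a, i⟩ b
    simp [N', retract, incl]
  obtain ⟨P, Q, hPQ⟩ := M.exists_mul_mul_eq_one
  obtain ⟨P', Q', hPQ'⟩ := N.exists_mul_mul_eq_one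
  obtain ⟨f, hf0, hfdeg, hf⟩ :=
    Matrix.exists_polynomial_le_rank_of_mul_mul_eq_one N' M P Q (.inr hPQ)
  obtain ⟨g, hg0, hgdeg, hg⟩ := Matrix.exists_polynomial_le_rank_of_mul_mul_eq_one N
    (M.submatrix (Prod.map id incl) id) P' Q' (.inl hPQ')
  have hMle : M.rank ≤ n * (k + 2) := by simpa using M.rank_le_card_height
  have hNle : N.rank ≤ n * k := by simpa using N.rank_le_card_height
  have hdeg : ((f * g).natDegree : Cardinal) < Cardinal.mk F := by
    refine lt_of_le_of_lt ?_ hF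
    have : (f * g).natDegree ≤ 2 * n * (k + 2) :=
      Polynomial.natDegree_mul_le.trans (by nlinarith)
    exact_mod_cast this
  obtain ⟨t, ht⟩ := (f * g).exists_eval_ne_zero_of_natDegree_lt_card (mul_ne_zero hf0 hg0) hdeg
  rw [Polynomial.eval_mul] at ht
  have hMt := hf t (left_ne_zero_of_mul ht)
  have hNt := hg t (right_ne_zero_of_mul ht)
  set R := t • N' + M
  have hRmem : R ∈ blowUp B (k + 2) ℓ := Submodule.add_mem _ (Submodule.smul_mem _ t hN') hM
  have hsub : t • N + M.submatrix (Prod.map id incl) id = R.submatrix (Prod.map id incl) id := by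
    conv_lhs => rw [← hincl]
    rfl
  rw [hsub] at hNt
  let skipPenultimate : Fin (k + 1) → Fin (k + 2) := (Fin.last k).castSucc.succAbove
  have hle (u : Fin (k + 1) → Fin (k + 2)) : (R.submatrix (Prod.map id u) id).rank ≤ ρk1 :=
    hρk1.2 ⟨_, submatrix_mem_blowUp u hRmem, rfl⟩
  have hsm := R.rank_submodular (Prod.map id Fin.castSucc) (Prod.map id skipPenultimate)
    (Prod.map id incl) ?_ ?_ ?_
  · have := hle Fin.castSucc
    have := hle skipPenultimate
    omega
  · refine Set.eq_univ_of_forall ?_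
    rintro ⟨a, i⟩
    refine Fin.lastCases ?_ (fun i => ?_) i
    · exact .inr ⟨(a, Fin.last k), by ext <;> simp [skipPenultimate, Fin.succAbove]⟩
    · exact .inl ⟨(a, i), rfl⟩
  · rintro _ ⟨⟨a, i⟩, rfl⟩
    exact ⟨(a, i.castSucc), rfl⟩
  · rintro _ ⟨⟨a, i⟩, rfl⟩
    exact ⟨(a, i.castSucc), by ext <;> simp [skipPenultimate, incl, Fin.succAbove, Fin.lt_def]⟩
end

section
/- Let F be a field and E a finite extension field of F of degree e. Let B₁, …, B_m ∈ M(n, F) and let d be a positive integer. If there exist matrices T₁, …, T_m ∈ M(d, E) such that the matrix Σᵢ Bᵢ ⊗ Tᵢ ∈ M(nd, E) has rank t over E, then there exist matrices T′₁, …, T′_m ∈ M(de, F) such that the matrix Σᵢ Bᵢ ⊗ T′ᵢ ∈ M(nde, F) has rank t·e over F. (The matrices T′ᵢ may be obtained from the Tᵢ by replacing each entry with its e×e matrix under the left regular representation of E over F.) -/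
open Matrix Kronecker

/-- Replacing each entry of a square matrix by its image under the left regular representation
multiplies the rank by the degree of the extension. -/
theorem Matrix.rank_comp_map_leftMulMatrix {F E ι κ : Type*} [Field F] [Field E] [Algebra F E]
    [Fintype ι] [DecidableEq ι] [Fintype κ] [DecidableEq κ]
    (b : Module.Basis κ F E) (A : Matrix ι ι E) :
    (Matrix.comp ι ι κ κ F (A.map (Algebra.leftMulMatrix b))).rank =
      A.rank * Module.finrank F E := by
  have hA := LinearMap.restrictScalars_toMatrix b (Pi.basisFun E ι) A.toLin'
  rw [LinearMap.toMatrix_eq_toMatrix', LinearMap.toMatrix'_toLin'] at hA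
  rw [← hA, Matrix.rank_eq_finrank_range_toLin _ (b.smulTower' (Pi.basisFun E ι))
      (b.smulTower' (Pi.basisFun E ι)), Matrix.toLin_toMatrix,
    LinearMap.range_restrictScalars, mul_comm]
  exact (Module.finrank_mul_finrank F E (LinearMap.range A.toLin')).symm

/-- The left regular representation of `Σᵢ Bᵢ ⊗ Tᵢ`, with the `Bᵢ` defined over the base, is
`Σᵢ Bᵢ ⊗ Tᵢ'` up to reassociating the indices, where `Tᵢ'` is that of `Tᵢ`. -/
theorem Matrix.comp_map_leftMulMatrix_sum_kronecker {F E α ι ι' κ : Type*}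
    [CommRing F] [CommRing E] [Algebra F E] [Fintype κ] [DecidableEq κ]
    (b : Module.Basis κ F E) (s : Finset α) (B : α → Matrix ι ι F) (T : α → Matrix ι' ι' E) :
    Matrix.comp (ι × ι') (ι × ι') κ κ F
        ((∑ i ∈ s, (B i).map (algebraMap F E) ⊗ₖ T i).map (Algebra.leftMulMatrix b)) =
      (∑ i ∈ s, B i ⊗ₖ Matrix.comp ι' ι' κ κ F ((T i).map (Algebra.leftMulMatrix b))).submatrix
        (Equiv.prodAssoc ι ι' κ) (Equiv.prodAssoc ι ι' κ) := by
  ext ⟨⟨i, j⟩, k⟩ ⟨⟨i', j'⟩, k'⟩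
  simp [Matrix.sum_apply, ← Algebra.smul_def]

/-- Restriction of scalars for blow-up ranks: if `E/F` has degree `e` and
`Σᵢ Bᵢ ⊗ Tᵢ` (with `Bᵢ` over `F`, `Tᵢ` `d×d` over `E`) has rank `t` over `E`, then there
are `de×de` matrices `T′ᵢ` over `F` with `Σᵢ Bᵢ ⊗ T′ᵢ` of rank `t·e` over `F`. -/
theorem stmt18 {F E : Type} [Field F] [Field E] [Algebra F E]
    (e : ℕ) (he : Module.finrank F E = e)
    {n m d : ℕ} (hd : 0 < d)
    (B : Fin m → Matrix (Fin n) (Fin n) F)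
    (T : Fin m → Matrix (Fin d) (Fin d) E)
    (t : ℕ)
    (h : (∑ i, (B i).map (algebraMap F E) ⊗ₖ T i).rank = t) :
    ∃ T' : Fin m → Matrix (Fin (d * e)) (Fin (d * e)) F,
      (∑ i, B i ⊗ₖ T' i).rank = t * e := by
  rcases Nat.eq_zero_or_pos e with rfl | hpos
  · refine ⟨0, ?_⟩
    simp
  have : FiniteDimensional F E := Module.finite_of_finrank_pos (he ▸ hpos)
  let b := Module.finBasisOfFinrankEq F E he
  let r : Fin (d * e) ≃ Fin d × Fin e := finProdFinEquiv.symm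
  let R (i : Fin m) := Matrix.comp _ _ _ _ F ((T i).map (Algebra.leftMulMatrix b))
  refine ⟨fun i ↦ (R i).submatrix r r, ?_⟩
  have hR : ∑ i, B i ⊗ₖ (R i).submatrix r r =
      (∑ i, B i ⊗ₖ R i).submatrix ((Equiv.refl _).prodCongr r) ((Equiv.refl _).prodCongr r) := by
    ext ⟨i, j⟩ ⟨i', j'⟩
    simp [Matrix.sum_apply]
  have hrank := Matrix.rank_comp_map_leftMulMatrix b (∑ i, (B i).map (algebraMap F E) ⊗ₖ T i)
  rw [Matrix.comp_map_leftMulMatrix_sum_kronecker, Matrix.rank_submatrix, h, he] at hrank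
  rw [hR, Matrix.rank_submatrix, hrank]
end
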